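/- Let K be an algebraically closed field and Δ a simplicial complex on a finite vertex set X. If the Stanley-Reisner ring K[Δ] has a 2-linear resolution, then ara I_Δ = pd K[Δ]. -/

import Mathlib

open MvPolynomial

variable {V : Type*} [DecidableEq V]

def IsSimplicialComplex (Δ : Set (Finset V)) : Prop :=
  (∀ v : V, ({v} : Finset V) ∈ Δ) ∧ ∀ F ∈ Δ, ∀ G ⊆ F, G ∈ Δ

noncomputable def srIdeal (K : Type*) [Field K] (Δ : Set (Finset V)) :
    Ideal (MvPolynomial V K) :=
  Ideal.span ((fun S : Finset V => ∏ v ∈ S, (X v : MvPolynomial V K)) '' {S | S ∉ Δ})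

/-- A generalized tree on the vertex set `W ⊆ V`: either a simplex on `W`, or obtained
from a generalized tree by adding a cone over one of its faces from a new vertex. -/
inductive IsGeneralizedTree : Finset V → Set (Finset V) → Prop
  | simplex (W : Finset V) : IsGeneralizedTree W {S | S ⊆ W}
  | cone (W : Finset V) (Δ : Set (Finset V)) (F : Finset V) (x : V)
      (hΔ : IsGeneralizedTree W Δ) (hF : F ∈ Δ) (hx : x ∉ W) :
      IsGeneralizedTree (insert x W) (Δ ∪ {S | S ⊆ insert x F})

/-- `K[Δ]` has a 2-linear resolution: there is a graded free resolution
`… → F₂ → F₁ → F₀ = R → K[Δ] → 0` in which `F₀ = R` (one generator in degree `0`) and,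
for `i ≥ 1`, `Fᵢ` is generated in degree `i + 1`; equivalently the entries of the matrix
of `F₁ → F₀` are homogeneous of degree `2` and all further matrices have entries
homogeneous of degree `1`. -/
def HasTwoLinearResolution (K : Type*) [Field K] (Δ : Set (Finset V)) : Prop :=
  ∃ (ι : ℕ → Type) (_ : ∀ i, Finite (ι i)) (u : Unique (ι 0))
    (d : ∀ i : ℕ, ((ι (i + 1) →₀ MvPolynomial V K) →ₗ[MvPolynomial V K]
      (ι i →₀ MvPolynomial V K)))
    (ε : ((ι 0 →₀ MvPolynomial V K) →ₗ[MvPolynomial V K]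
      (MvPolynomial V K ⧸ srIdeal K Δ))),
    ε (Finsupp.single u.default 1) = 1 ∧
    Function.Surjective ε ∧
    LinearMap.ker ε = LinearMap.range (d 0) ∧
    (∀ i : ℕ, LinearMap.ker (d i) = LinearMap.range (d (i + 1))) ∧
    (∀ (b : ι 1) (c : ι 0),
      ((d 0) (Finsupp.single b 1)) c ∈ homogeneousSubmodule V K 2) ∧
    (∀ (i : ℕ) (b : ι (i + 2)) (c : ι (i + 1)),
      ((d (i + 1)) (Finsupp.single b 1)) c ∈ homogeneousSubmodule V K 1)

open CategoryTheory

/-- The arithmetical rank of an ideal: the least number of elements generating it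
up to radical. -/
noncomputable def ara {R : Type*} [CommRing R] (I : Ideal R) : ℕ :=
  sInf {s : ℕ | ∃ a : Fin s → R, (Ideal.span (Set.range a)).radical = I.radical}

/-- The projective dimension of a module: the least `n` for which `M` admits a projective
resolution vanishing in homological degrees `> n`. -/
noncomputable def projDim {R : Type*} [CommRing R] (M : ModuleCat R) : ℕ :=
  sInf {m : ℕ | ∃ P : ProjectiveResolution M, ∀ i : ℕ, m < i → Limits.IsZero (P.complex.X i)}

/-!
A 2-linear resolution forces `I_Δ` to be generated by the quadrics `X x * X y` for the non-edges
`xy` of the 1-skeleton `G` of `Δ`, and forces `G` to be chordal: a cycle without a chord would give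
a Koszul cycle of too high a degree that is not a boundary. By Dirac's theorem `G` is therefore
built from a clique by repeatedly adding a vertex `v` whose neighbours form a clique, and the ideal
changes from `I` to `I + v * (Y)`, where `Y` is the set of non-neighbours of `v`. Let `p` be the
maximum over these steps of `#Y` plus the number of later steps.

* Multiplication by `v` gives exact sequences `0 → R/(Y) → R/(I + v * (Y)) → R/(I + (v)) → 0`, so
  `pd ≤ p`; and generators `g` of `I` up to radical which are triangular in the variables `Y` give
  generators `v * y₀, g₀ + v * y₁, g₁ + v * y₂, …`, so `ara ≤ p`.
* If `p > 0` there are disjoint nonempty sets of vertices `A`, `B` with `p + 1` elements altogether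
  and no edge between them. Modulo the other variables the variety becomes the union of two
  coordinate subspaces of dimensions `#A` and `#B` that meet only in the origin, and by
  Mayer–Vietoris its ideal has cohomological dimension `p`; so that of `I_Δ` is at least `p`.
* The cohomological dimension is at most the arithmetical rank, and for monomial ideals `I` at most
  the projective dimension of `R/I` (Lyubeznik), since the substitutions `x ↦ x ^ k` are flat and
  carry `I` to ideals cofinal with its powers.
-/

open CategoryTheory.Abelian
open scoped TensorProduct

universe u

/-! ### Pulling back and connecting `Ext` classes -/

section Ext

variable {R : Type u} [CommRing R] {A B C : Type u} [AddCommGroup A] [Module R A]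
  [AddCommGroup B] [Module R B] [AddCommGroup C] [Module R C] {M : ModuleCat.{u} R} {i : ℕ}

/-- The map `Extⁱ(B, M) → Extⁱ(A, M)` induced by a linear map `A → B`. -/
noncomputable def extPullback (f : A →ₗ[R] B) :
    Ext (ModuleCat.of R B) M i →+ Ext (ModuleCat.of R A) M i :=
  (Ext.mk₀ (ModuleCat.ofHom f)).precomp M (zero_add i)

theorem extPullback_comp (f : A →ₗ[R] B) (g : B →ₗ[R] C) (θ : Ext (ModuleCat.of R C) M i) :
    extPullback (g ∘ₗ f) θ = extPullback f (extPullback g θ) := by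
  simp [extPullback, ModuleCat.ofHom_comp]

theorem extPullback_id (θ : Ext (ModuleCat.of R A) M i) :
    extPullback LinearMap.id θ = θ := by
  simp [extPullback]

theorem extPullback_add (f g : A →ₗ[R] B) (θ : Ext (ModuleCat.of R B) M i) :
    extPullback (f + g) θ = extPullback f θ + extPullback g θ := by
  simp [extPullback, ModuleCat.ofHom_add, Ext.mk₀_add]

theorem extPullback_sub (f g : A →ₗ[R] B) (θ : Ext (ModuleCat.of R B) M i) :
    extPullback (f - g) θ = extPullback f θ - extPullback g θ := by
  rw [eq_sub_iff_add_eq, ← extPullback_add, sub_add_cancel]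

theorem extPullback_sum {ι : Type*} (s : Finset ι) (f : ι → A →ₗ[R] B)
    (θ : Ext (ModuleCat.of R B) M i) :
    extPullback (∑ j ∈ s, f j) θ = ∑ j ∈ s, extPullback (f j) θ :=
  map_sum (AddMonoidHom.mk' (fun g : A →ₗ[R] B ↦ extPullback g θ)
    fun g h ↦ extPullback_add g h θ) f s

theorem smul_ext_eq_zero_of_mem_annihilator {r : R} (hr : r ∈ Module.annihilator R A)
    (θ : Ext (ModuleCat.of R A) M i) : r • θ = 0 := by
  have hzero : r • 𝟙 (ModuleCat.of R A) = 0 := by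
    ext a
    exact Module.mem_annihilator.1 hr a
  calc r • θ = (Ext.mk₀ (r • 𝟙 (ModuleCat.of R A))).comp θ (zero_add i) := by
        rw [Ext.mk₀_smul, Ext.smul_comp, Ext.mk₀_id_comp]
    _ = 0 := by rw [hzero, Ext.mk₀_zero, Ext.zero_comp]

theorem ext_pi_eq_zero {ι : Type} [Finite ι] (hA : ∀ θ : Ext (ModuleCat.of R A) M i, θ = 0)
    (θ : Ext (ModuleCat.of R (ι → A)) M i) : θ = 0 := by
  classical
  have := Fintype.ofFinite ι
  have hid : (LinearMap.id : (ι → A) →ₗ[R] (ι → A)) =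
      ∑ j, LinearMap.single R (fun _ : ι ↦ A) j ∘ₗ LinearMap.proj j := by
    ext j a k
    simp [Finset.sum_apply, Pi.single_apply]
  rw [← extPullback_id θ, hid, extPullback_sum]
  exact Finset.sum_eq_zero fun j _ ↦ by
    rw [extPullback_comp, hA (extPullback _ θ), map_zero]

theorem shortExact_of_exact {f : A →ₗ[R] B} {g : B →ₗ[R] C} (h : Function.Exact f g)
    (hf : Function.Injective f) (hg : Function.Surjective g) :
    (ModuleCat.shortComplexOfCompEqZero f g h.linearMap_comp_eq_zero).ShortExact :=
  ModuleCat.shortComplex_shortExact _ h hf hg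

/-- The connecting map `Extⁱ(A, M) → Extⁱ⁺¹(C, M)` of a short exact sequence
`0 → A → B → C → 0`. -/
noncomputable def extConnecting {f : A →ₗ[R] B} {g : B →ₗ[R] C} (h : Function.Exact f g)
    (hf : Function.Injective f) (hg : Function.Surjective g) :
    Ext (ModuleCat.of R A) M i →+ Ext (ModuleCat.of R C) M (i + 1) :=
  (shortExact_of_exact h hf hg).extClass.precomp M (add_comm 1 i)

theorem exists_extConnecting_eq {f : A →ₗ[R] B} {g : B →ₗ[R] C} (h : Function.Exact f g)
    (hf : Function.Injective f) (hg : Function.Surjective g)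
    {θ : Ext (ModuleCat.of R C) M (i + 1)} (hθ : extPullback g θ = 0) :
    ∃ φ, extConnecting h hf hg φ = θ :=
  Ext.contravariant_sequence_exact₃ (shortExact_of_exact h hf hg) M θ hθ (add_comm 1 i)

theorem extPullback_extConnecting {A' B' C' : Type u} [AddCommGroup A'] [Module R A']
    [AddCommGroup B'] [Module R B'] [AddCommGroup C'] [Module R C']
    {f : A →ₗ[R] B} {g : B →ₗ[R] C} (h : Function.Exact f g)
    (hf : Function.Injective f) (hg : Function.Surjective g)
    {f' : A' →ₗ[R] B'} {g' : B' →ₗ[R] C'} (h' : Function.Exact f' g')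
    (hf' : Function.Injective f') (hg' : Function.Surjective g')
    {a : A' →ₗ[R] A} {b : B' →ₗ[R] B} {c : C' →ₗ[R] C}
    (hab : f ∘ₗ a = b ∘ₗ f') (hbc : g ∘ₗ b = c ∘ₗ g') (φ : Ext (ModuleCat.of R A) M i) :
    extPullback c (extConnecting h hf hg φ) = extConnecting h' hf' hg' (extPullback a φ) := by
  have hS := shortExact_of_exact h hf hg
  have hS' := shortExact_of_exact h' hf' hg'
  let τ : ModuleCat.shortComplexOfCompEqZero f' g' h'.linearMap_comp_eq_zero ⟶
      ModuleCat.shortComplexOfCompEqZero f g h.linearMap_comp_eq_zero :=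
    { τ₁ := ModuleCat.ofHom a
      τ₂ := ModuleCat.ofHom b
      τ₃ := ModuleCat.ofHom c
      comm₁₂ := by ext x; exact LinearMap.congr_fun hab x
      comm₂₃ := by ext x; exact LinearMap.congr_fun hbc x }
  have hnat : hS'.extClass.comp (Ext.mk₀ (ModuleCat.ofHom a)) (add_zero 1) =
      (Ext.mk₀ (ModuleCat.ofHom c)).comp hS.extClass (zero_add 1) :=
    ShortComplex.ShortExact.extClass_naturality hS' hS τ
  change (Ext.mk₀ (ModuleCat.ofHom c)).comp (hS.extClass.comp φ (add_comm 1 i)) (zero_add _) =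
    hS'.extClass.comp ((Ext.mk₀ (ModuleCat.ofHom a)).comp φ (zero_add i)) (add_comm 1 i)
  rw [← Ext.comp_assoc (a₁₂ := 1) _ _ _ (by omega) (by omega) (by omega), ← hnat,
    Ext.comp_assoc (a₂₃ := i) _ _ _ (by omega) (by omega) (by omega)]

theorem eq_zero_of_extPullback_eq_zero {g : B →ₗ[R] C} (hg : Function.Surjective g)
    (hker : ∀ φ : Ext (ModuleCat.of R (LinearMap.ker g)) M i, φ = 0)
    {θ : Ext (ModuleCat.of R C) M (i + 1)} (hθ : extPullback g θ = 0) : θ = 0 := by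
  obtain ⟨φ, rfl⟩ := exists_extConnecting_eq (LinearMap.exact_subtype_ker_map g)
    (Submodule.subtype_injective _) hg hθ
  rw [hker φ, map_zero]

end Ext

/-! ### Cohomological dimension -/

section CohomologicalDimension

variable {R : Type u} [CommRing R] {M : ModuleCat.{u} R} {I : Ideal R} {s : ℕ}

/-- The bound `cd (I, M) ≤ s` on the cohomological dimension, i.e. the vanishing of the local
cohomology modules `colim Extⁱ(N, M)` for `i > s`, where `N` runs over the finite `I`-torsion
modules: every class in such an `Extⁱ(N, M)` is killed by pulling it back along a suitable
surjection `N' → N` of finite `I`-torsion modules. -/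
def CohomDimLE (M : ModuleCat.{u} R) (I : Ideal R) (s : ℕ) : Prop :=
  ∀ (N : Type u) [AddCommGroup N] [Module R N] [Module.Finite R N],
    I ≤ (Module.annihilator R N).radical → ∀ i, s < i → ∀ θ : Ext (ModuleCat.of R N) M i,
      ∃ (N' : ModuleCat.{u} R) (_ : Module.Finite R N') (π : N' →ₗ[R] N),
        Function.Surjective π ∧ I ≤ (Module.annihilator R N').radical ∧ extPullback π θ = 0

theorem CohomDimLE.congr {J : Ideal R} (h : CohomDimLE M I s) (hIJ : I.radical = J.radical) :
    CohomDimLE M J s := by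
  have le_iff (L : Ideal R) : J ≤ L.radical ↔ I ≤ L.radical := by
    rw [← L.radical_isRadical.radical_le_iff, ← hIJ, L.radical_isRadical.radical_le_iff]
  intro N _ _ _ hN i hi θ
  obtain ⟨N', hfin, π, hπ, hN', hθ⟩ := h N ((le_iff _).1 hN) i hi θ
  exact ⟨N', hfin, π, hπ, (le_iff _).2 hN', hθ⟩

theorem cohomDimLE_bot (M : ModuleCat.{u} R) : CohomDimLE M ⊥ 0 := by
  intro N _ _ _ _ i hi θ
  obtain ⟨n, π, hπ⟩ := Module.Finite.exists_fin' R N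
  have : Projective (ModuleCat.of R (Fin n → R)) :=
    ModuleCat.projective_of_free (Pi.basisFun R (Fin n))
  exact ⟨ModuleCat.of R (Fin n → R), inferInstanceAs (Module.Finite R (Fin n → R)), π, hπ, bot_le,
    Ext.eq_zero_of_hasProjectiveDimensionLT _ 1 hi⟩

theorem exists_pow_smul_eq_zero_of_pow_add_smul_eq_zero {L : Type*} [AddCommGroup L] [Module R L]
    [IsNoetherian R L] (f : R) (k : ℕ) :
    ∃ r, ∀ l : L, f ^ (r + k) • l = 0 → f ^ r • l = 0 := by
  obtain ⟨r, hr⟩ := monotone_stabilizes_iff_noetherian.2 ‹IsNoetherian R L›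
    (algebraMap R (Module.End R L) f).iterateKer
  refine ⟨r, fun l hl ↦ ?_⟩
  have hmem (n : ℕ) : l ∈ (algebraMap R (Module.End R L) f).iterateKer n ↔ f ^ n • l = 0 := by
    change (algebraMap R (Module.End R L) f ^ n) l = 0 ↔ _
    rw [← map_pow, Module.algebraMap_end_apply]
  rw [← hmem] at hl ⊢
  rwa [hr (r + k) (Nat.le_add_right r k)]

/- `P` is the fibre product of `N` and `L'` over `L` along `f ^ k` and `ρ`; on `f ^ (r + k) P`
the lift is `f ^ (r + k) p ↦ f ^ r p₂`, well defined once the `f`-torsion of `L'` is stable. -/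
theorem exists_fibreProduct_lift {N L' : Type*} [AddCommGroup N] [Module R N] [AddCommGroup L']
    [Module R L'] [IsNoetherian R L'] {f : R} {k : ℕ} {L : Submodule R N}
    (hL : ∀ n : N, f ^ k • n ∈ L) {ρ : L' →ₗ[R] L} (hρ : Function.Surjective ρ) :
    ∃ (P : Submodule R (N × L')) (t : ℕ)
      (a : LinearMap.range (LinearMap.lsmul R P (f ^ t)) →ₗ[R] L'),
      (∀ n, ∃ p : P, p.1.1 = n) ∧ ∀ q, (ρ (a q) : N) = q.1.1.1 := by
  obtain ⟨r, hr⟩ := exists_pow_smul_eq_zero_of_pow_add_smul_eq_zero (R := R) (L := L') f k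
  let P : Submodule R (N × L') := LinearMap.eqLocus
    (f ^ k • LinearMap.fst R N L') (L.subtype ∘ₗ ρ ∘ₗ LinearMap.snd R N L')
  have hP (p : P) : f ^ k • p.1.1 = (ρ p.1.2 : N) := p.2
  have hker : LinearMap.ker (LinearMap.lsmul R P (f ^ (r + k))) ≤
      LinearMap.ker (f ^ r • LinearMap.snd R N L' ∘ₗ P.subtype) := fun p hp ↦
    hr _ (congrArg (fun q : P ↦ q.1.2) (LinearMap.mem_ker.1 hp))
  refine ⟨P, r + k, (LinearMap.ker (LinearMap.lsmul R P (f ^ (r + k)))).liftQ _ hker ∘ₗ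
    (LinearMap.lsmul R P (f ^ (r + k))).quotKerEquivRange.symm.toLinearMap, fun n ↦ ?_, ?_⟩
  · obtain ⟨l, hl⟩ := hρ ⟨f ^ k • n, hL n⟩
    exact ⟨⟨(n, l), (congrArg Subtype.val hl).symm⟩, rfl⟩
  · rintro ⟨_, p, rfl⟩
    have hsymm := (LinearMap.lsmul R P (f ^ (r + k))).quotKerEquivRange_symm_apply_image p
      ⟨p, rfl⟩
    rw [LinearMap.comp_apply, LinearEquiv.coe_coe, hsymm]
    change (ρ (f ^ r • p.1.2) : N) = f ^ (r + k) • p.1.1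
    rw [map_smul, Submodule.coe_smul, ← hP, smul_smul, ← pow_add]

theorem CohomDimLE.sup_span_singleton [IsNoetherianRing R] (h : CohomDimLE M I s) (f : R) :
    CohomDimLE M (I ⊔ Ideal.span {f}) (s + 1) := by
  intro N _ _ _ hN i hi θ
  obtain ⟨i, rfl⟩ := Nat.exists_eq_add_one_of_ne_zero (Nat.ne_zero_of_lt hi)
  obtain ⟨k, hk⟩ := hN (Ideal.mem_sup_right (Ideal.mem_span_singleton_self f))
  obtain ⟨N', _, π, hπ, hN', hθ⟩ := h N (le_sup_left.trans hN) (i + 1) (by omega) θ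
  let L : Submodule R N' := LinearMap.range (LinearMap.lsmul R N' (f ^ k))
  have hLπ : L ≤ LinearMap.ker π := by
    rintro _ ⟨n, rfl⟩
    simp [Module.mem_annihilator.1 hk]
  obtain ⟨φ, hφ⟩ := exists_extConnecting_eq (LinearMap.exact_subtype_mkQ L) L.subtype_injective
    L.mkQ_surjective (θ := extPullback (L.liftQ π hLπ) θ) (by
      rw [← extPullback_comp, L.liftQ_mkQ, hθ])
  have hL : I ≤ (Module.annihilator R L).radical :=
    hN'.trans (Ideal.radical_mono (L.subtype.annihilator_le_of_injective L.subtype_injective))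
  obtain ⟨L', _, ρ, hρ, hL', hφ'⟩ := h L hL i (by omega) φ
  obtain ⟨P, t, a, hPN, ha⟩ :=
    exists_fibreProduct_lift (f := f) (k := k) (L := L) (fun n ↦ ⟨n, rfl⟩) hρ
  let p : P →ₗ[R] N' := LinearMap.fst R N' L' ∘ₗ P.subtype
  let Q : Submodule R P := LinearMap.range (LinearMap.lsmul R P (f ^ t))
  let aQ : Q →ₗ[R] L' := a
  have hcomm : L.subtype ∘ₗ (ρ ∘ₗ aQ) = p ∘ₗ Q.subtype := LinearMap.ext ha
  have hQL : Q ≤ L.comap p := fun q hq ↦ by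
    rw [Submodule.mem_comap, ← show (ρ (a ⟨q, hq⟩) : N') = p q from ha ⟨q, hq⟩]
    exact Subtype.mem _
  have hann : I ≤ (Module.annihilator R P).radical := by
    refine (le_inf hN' hL').trans ?_
    rw [← Ideal.radical_inf, ← Module.annihilator_prod]
    exact Ideal.radical_mono (P.subtype.annihilator_le_of_injective P.subtype_injective)
  refine ⟨ModuleCat.of R (P ⧸ Q), inferInstanceAs (Module.Finite R (P ⧸ Q)),
    L.liftQ π hLπ ∘ₗ Q.mapQ L p hQL, fun n ↦ ?_, sup_le (hann.trans (Ideal.radical_mono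
      (Q.mkQ.annihilator_le_of_surjective Q.mkQ_surjective))) ?_, ?_⟩
  · obtain ⟨n', rfl⟩ := hπ n
    obtain ⟨q, rfl⟩ := hPN n'
    exact ⟨Q.mkQ q, rfl⟩
  · refine (Ideal.span_singleton_le_iff_mem _).2 ⟨t, Module.mem_annihilator.2 fun q ↦ ?_⟩
    obtain ⟨q, rfl⟩ := Q.mkQ_surjective q
    exact (Submodule.Quotient.mk_eq_zero Q).2 ⟨q, rfl⟩
  · have hnat := extPullback_extConnecting (LinearMap.exact_subtype_mkQ L) L.subtype_injective
      L.mkQ_surjective (LinearMap.exact_subtype_mkQ Q) Q.subtype_injective Q.mkQ_surjective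
      (A' := Q) (B' := P) (C' := P ⧸ Q) (c := Q.mapQ L p hQL) hcomm (by ext; rfl) φ
    rw [extPullback_comp, ← hφ, hnat, extPullback_comp, hφ', map_zero, map_zero]

theorem CohomDimLE.sup_span_finset [IsNoetherianRing R] (h : CohomDimLE M I s) {ι : Type*}
    (t : Finset ι) (a : ι → R) : CohomDimLE M (I ⊔ Ideal.span (a '' t)) (s + t.card) := by
  classical
  induction t using Finset.induction_on with
  | empty => simpa using h
  | insert j t hj ih =>
    rw [Finset.coe_insert, Set.image_insert_eq, Ideal.span_insert, Finset.card_insert_of_notMem hj,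
      sup_comm (Ideal.span {a j}), ← sup_assoc, ← add_assoc]
    exact ih.sup_span_singleton (a j)

theorem cohomDimLE_span_range [IsNoetherianRing R] (M : ModuleCat.{u} R) {s : ℕ} (a : Fin s → R) :
    CohomDimLE M (Ideal.span (Set.range a)) s := by
  simpa using (cohomDimLE_bot M).sup_span_finset Finset.univ a

end CohomologicalDimension

/-! ### Depth and the Mayer–Vietoris lower bound -/

section Depth

variable {R : Type u} [CommRing R] {m : Ideal R} {n : ℕ} {M M' : Type u} [AddCommGroup M]
  [Module R M] [AddCommGroup M'] [Module R M']

/-- The module `M` has depth exactly `n` along `m`, phrased through `Ext`: the groups `Extⁱ(N, M)`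
vanish for all `m`-torsion modules `N` and `i < n`, while `Extⁿ(R/m, M) ≠ 0`. -/
def HasDepth (m : Ideal R) (n : ℕ) (M : Type u) [AddCommGroup M] [Module R M] : Prop :=
  (∀ (N : Type u) [AddCommGroup N] [Module R N], m ≤ (Module.annihilator R N).radical →
    ∀ i < n, ∀ θ : Ext (ModuleCat.of R N) (ModuleCat.of R M) i, θ = 0) ∧
  ∃ η : Ext (ModuleCat.of R (R ⧸ m)) (ModuleCat.of R M) n, η ≠ 0

theorem hasDepth_zero_quotient (hm : m ≠ ⊤) : HasDepth m 0 (R ⧸ m) := by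
  have := Ideal.Quotient.nontrivial_iff.2 hm
  refine ⟨fun _ _ _ _ i hi ↦ absurd hi i.not_lt_zero, Ext.mk₀ (𝟙 _), fun h ↦ ?_⟩
  exact one_ne_zero (congrArg (fun f ↦ f.hom (1 : R ⧸ m)) ((Ext.mk₀_eq_zero_iff _).1 h))

theorem le_radical_annihilator_quotient (I : Ideal R) :
    I ≤ (Module.annihilator R (R ⧸ I)).radical := by
  rw [Ideal.annihilator_quotient]
  exact Ideal.le_radical

variable {x : R} {π : M →ₗ[R] M'}

theorem ext_eq_zero_of_smul_eq_zero (hx : Function.Injective (LinearMap.lsmul R M x))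
    (hex : Function.Exact (LinearMap.lsmul R M x) π) (hπ : Function.Surjective π)
    {N : ModuleCat.{u} R} {i : ℕ} (hM' : ∀ j < i, ∀ θ : Ext N (ModuleCat.of R M') j, θ = 0)
    {θ : Ext N (ModuleCat.of R M) i} (hθ : x • θ = 0) : θ = 0 := by
  rcases i with _ | i
  · obtain ⟨f, rfl⟩ := (Ext.mk₀_bijective _ _).2 θ
    rw [← Ext.mk₀_smul, Ext.mk₀_eq_zero_iff] at hθ
    rw [Ext.mk₀_eq_zero_iff]
    ext y
    exact hx ((congrArg (fun g ↦ g.hom y) hθ).trans (map_zero _).symm)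
  · have hcomp : θ.comp (Ext.mk₀ (ModuleCat.ofHom (LinearMap.lsmul R M x))) (add_zero _) = 0 := by
      rw [← hθ, Ext.smul_eq_comp_mk₀]
      rfl
    obtain ⟨φ, rfl⟩ :=
      Ext.covariant_sequence_exact₁ N (shortExact_of_exact hex hx hπ) θ hcomp (n₀ := i) rfl
    rw [hM' i i.lt_succ_self φ, Ext.zero_comp]

theorem ext_eq_zero_of_pow_smul_eq_zero (hx : Function.Injective (LinearMap.lsmul R M x))
    (hex : Function.Exact (LinearMap.lsmul R M x) π) (hπ : Function.Surjective π)
    {N : ModuleCat.{u} R} {i : ℕ} (hM' : ∀ j < i, ∀ θ : Ext N (ModuleCat.of R M') j, θ = 0)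
    {θ : Ext N (ModuleCat.of R M) i} {k : ℕ} (hθ : x ^ k • θ = 0) : θ = 0 := by
  induction k with
  | zero => simpa using hθ
  | succ k ih =>
    rw [pow_succ', mul_smul] at hθ
    exact ih (ext_eq_zero_of_smul_eq_zero hx hex hπ hM' hθ)

theorem HasDepth.succ (h : HasDepth m n M') (hxm : x ∈ m)
    (hx : Function.Injective (LinearMap.lsmul R M x))
    (hex : Function.Exact (LinearMap.lsmul R M x) π) (hπ : Function.Surjective π) :
    HasDepth m (n + 1) M := by
  obtain ⟨hvanish, η, hη⟩ := h
  have hvanish_succ (N : Type u) [AddCommGroup N] [Module R N]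
      (hN : m ≤ (Module.annihilator R N).radical) (i : ℕ) (hi : i < n + 1)
      (θ : Ext (ModuleCat.of R N) (ModuleCat.of R M) i) : θ = 0 := by
    obtain ⟨k, hk⟩ := hN hxm
    exact ext_eq_zero_of_pow_smul_eq_zero hx hex hπ (fun j hj ↦ hvanish N hN j (by omega))
      (smul_ext_eq_zero_of_mem_annihilator hk θ)
  have hS := shortExact_of_exact hex hx hπ
  refine ⟨hvanish_succ, η.comp hS.extClass rfl, fun h0 ↦ hη ?_⟩
  obtain ⟨φ, rfl⟩ := Ext.covariant_sequence_exact₃ _ hS η rfl h0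
  rw [hvanish_succ _ (le_radical_annihilator_quotient m) n n.lt_succ_self φ, Ext.zero_comp]

end Depth

section MayerVietoris

variable {R : Type u} [CommRing R]

/-- The first map of the Mayer–Vietoris sequence `R/(I ∩ J) → R/I × R/J → R/(I + J)`. -/
def mayerVietorisLeft (I J : Ideal R) : (R ⧸ I ⊓ J) →ₗ[R] (R ⧸ I) × (R ⧸ J) :=
  LinearMap.prod (Submodule.factor inf_le_left) (Submodule.factor inf_le_right)

/-- The second map of the Mayer–Vietoris sequence `R/(I ∩ J) → R/I × R/J → R/(I + J)`. -/
def mayerVietorisRight (I J : Ideal R) : (R ⧸ I) × (R ⧸ J) →ₗ[R] R ⧸ I ⊔ J :=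
  Submodule.factor le_sup_left ∘ₗ LinearMap.fst R _ _ -
    Submodule.factor le_sup_right ∘ₗ LinearMap.snd R _ _

theorem mayerVietorisLeft_injective (I J : Ideal R) :
    Function.Injective (mayerVietorisLeft I J) := by
  refine (injective_iff_map_eq_zero _).2 fun z hz ↦ ?_
  obtain ⟨z, rfl⟩ := Submodule.mkQ_surjective _ z
  exact (Submodule.Quotient.mk_eq_zero _).2
    ⟨(Submodule.Quotient.mk_eq_zero _).1 (congrArg Prod.fst hz),
      (Submodule.Quotient.mk_eq_zero _).1 (congrArg Prod.snd hz)⟩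

theorem mayerVietorisRight_mkQ (I J : Ideal R) (y z : R) :
    mayerVietorisRight I J (I.mkQ y, J.mkQ z) = (I ⊔ J).mkQ (y - z) :=
  (map_sub (I ⊔ J).mkQ y z).symm

theorem mayerVietorisRight_surjective (I J : Ideal R) :
    Function.Surjective (mayerVietorisRight I J) := by
  intro z
  obtain ⟨z, rfl⟩ := Submodule.mkQ_surjective _ z
  exact ⟨(I.mkQ z, J.mkQ 0), by rw [mayerVietorisRight_mkQ, sub_zero]⟩

theorem mayerVietoris_exact (I J : Ideal R) :
    Function.Exact (mayerVietorisLeft I J) (mayerVietorisRight I J) := by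
  rintro ⟨y, z⟩
  obtain ⟨y, rfl⟩ := Submodule.mkQ_surjective _ y
  obtain ⟨z, rfl⟩ := Submodule.mkQ_surjective _ z
  rw [mayerVietorisRight_mkQ]
  constructor
  · intro h
    obtain ⟨p, hp, q, hq, hpq⟩ := Submodule.mem_sup.1 ((Submodule.Quotient.mk_eq_zero _).1 h)
    refine ⟨(I ⊓ J).mkQ (y - p), Prod.ext ?_ ?_⟩
    · change I.mkQ (y - p) = I.mkQ y
      rw [map_sub, sub_eq_self]
      exact (Submodule.Quotient.mk_eq_zero _).2 hp
    · change J.mkQ (y - p) = J.mkQ z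
      rw [show y - p = z + q by linear_combination -hpq, map_add, add_eq_left]
      exact (Submodule.Quotient.mk_eq_zero _).2 hq
  · rintro ⟨w, hw⟩
    obtain ⟨w, rfl⟩ := Submodule.mkQ_surjective _ w
    rw [← mayerVietorisRight_mkQ, ← hw]
    change mayerVietorisRight I J (I.mkQ w, J.mkQ w) = 0
    rw [mayerVietorisRight_mkQ, sub_self, map_zero]

theorem exists_pow_inf_pow_le_inf_pow [IsNoetherianRing R] (I J : Ideal R) (k : ℕ) :
    ∃ t, I ^ (t + k) ⊓ J ^ k ≤ (I ⊓ J) ^ k := by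
  obtain ⟨t, ht⟩ := Ideal.exists_pow_inf_eq_pow_smul I (J ^ k : Ideal R)
  refine ⟨t, ?_⟩
  calc I ^ (t + k) ⊓ J ^ k = I ^ k * (I ^ t ⊓ J ^ k) := by
        simpa using ht (t + k) (Nat.le_add_right t k)
    _ ≤ I ^ k * J ^ k := Ideal.mul_mono_right inf_le_right
    _ = (I * J) ^ k := (mul_pow _ _ _).symm
    _ ≤ (I ⊓ J) ^ k := Ideal.pow_right_mono Ideal.mul_le_inf k

theorem exists_factor_eq_comp {N : Type*} [AddCommGroup N] [Module R N] {I J : Ideal R}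
    (hJI : J ≤ I) {π : N →ₗ[R] R ⧸ I} (hπ : Function.Surjective π)
    (hJ : J ≤ Module.annihilator R N) :
    ∃ l : (R ⧸ J) →ₗ[R] N, Submodule.factor hJI = π ∘ₗ l := by
  obtain ⟨y, hy⟩ := hπ (I.mkQ 1)
  refine ⟨J.liftQ (LinearMap.toSpanSingleton R N y) fun r hr ↦
    Module.mem_annihilator.1 (hJ hr) y, ?_⟩
  ext
  change I.mkQ 1 = π ((1 : R) • y)
  rw [one_smul, hy]

theorem extPullback_factor_eq_zero {M : ModuleCat.{u} R} {I P J : Ideal R} {n : ℕ} (hIP : I ≤ P)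
    (hPJ : P ≤ J) (hP : HasProjectiveDimensionLT (ModuleCat.of R (R ⧸ P)) n)
    (θ : Ext (ModuleCat.of R (R ⧸ J)) M n) :
    extPullback (Submodule.factor (hIP.trans hPJ)) θ = 0 := by
  have hcomp : Submodule.factor (hIP.trans hPJ) =
      Submodule.factor hPJ ∘ₗ Submodule.factor hIP := by
    ext
    rfl
  rw [hcomp, extPullback_comp,
    Ext.eq_zero_of_hasProjectiveDimensionLT (extPullback (Submodule.factor hPJ) θ) n le_rfl,
    map_zero]

theorem exists_inf_le_and_le_radical_sup [IsNoetherianRing R] {I J L : Ideal R}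
    (h : I ⊓ J ≤ L.radical) :
    ∃ a ≤ I, ∃ b ≤ J, a ⊓ b ≤ L ∧ I ⊔ J ≤ (a ⊔ b).radical := by
  obtain ⟨k, hk⟩ := Ideal.exists_pow_le_of_le_radical_of_fg h (IsNoetherian.noetherian _)
  obtain ⟨t, ht⟩ := exists_pow_inf_pow_le_inf_pow I J (k + 1)
  exact ⟨I ^ (t + (k + 1)), Ideal.pow_le_self (by omega), J ^ (k + 1), Ideal.pow_le_self (by omega),
    ht.trans ((Ideal.pow_le_pow_right k.le_succ).trans hk),
    sup_le (fun x hx ↦ ⟨_, Ideal.mem_sup_left (Ideal.pow_mem_pow hx _)⟩)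
      fun x hx ↦ ⟨_, Ideal.mem_sup_right (Ideal.pow_mem_pow hx _)⟩⟩

/- A nonzero class `η ∈ Extⁿ⁺¹(R/m, M)` dies on `R/J₁` and `R/J₂`, so it comes from a class in
`Extⁿ(R/(J₁ ∩ J₂), M)`. If `s < n`, that class dies on `R/(a ∩ b)` for suitable `a ≤ J₁`, `b ≤ J₂`,
hence `η` dies on `R/(a + b)`, although the depth of `M` makes `Extⁿ⁺¹` of
`R/(a + b) → R/m` injective. -/
theorem CohomDimLE.le_of_hasDepth [IsNoetherianRing R] {M : Type u} [AddCommGroup M] [Module R M]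
    {J₁ J₂ P₁ P₂ : Ideal R} {n s : ℕ} (hcd : CohomDimLE (ModuleCat.of R M) (J₁ ⊓ J₂) s)
    (hM : HasDepth (J₁ ⊔ J₂) (n + 1) M) (hJP₁ : J₁ ≤ P₁) (hPm₁ : P₁ ≤ J₁ ⊔ J₂)
    (hP₁ : HasProjectiveDimensionLT (ModuleCat.of R (R ⧸ P₁)) (n + 1)) (hJP₂ : J₂ ≤ P₂)
    (hPm₂ : P₂ ≤ J₁ ⊔ J₂) (hP₂ : HasProjectiveDimensionLT (ModuleCat.of R (R ⧸ P₂)) (n + 1)) :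
    n ≤ s := by
  by_contra! hsn
  obtain ⟨hvanish, η, hη⟩ := hM
  refine hη ?_
  obtain ⟨φ, rfl⟩ := exists_extConnecting_eq (mayerVietoris_exact J₁ J₂)
    (mayerVietorisLeft_injective J₁ J₂) (mayerVietorisRight_surjective J₁ J₂) (θ := η) (by
      rw [mayerVietorisRight, extPullback_sub, extPullback_comp, extPullback_comp,
        extPullback_factor_eq_zero hJP₁ hPm₁ hP₁, extPullback_factor_eq_zero hJP₂ hPm₂ hP₂,
        map_zero, map_zero, sub_zero])
  obtain ⟨N', _, π, hπ, hN', hφ⟩ := hcd (R ⧸ J₁ ⊓ J₂) (le_radical_annihilator_quotient _) n hsn φ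
  obtain ⟨a, ha, b, hb, hab, hrad⟩ := exists_inf_le_and_le_radical_sup hN'
  obtain ⟨l, hl⟩ := exists_factor_eq_comp (inf_le_inf ha hb) hπ hab
  have hnat := extPullback_extConnecting (mayerVietoris_exact J₁ J₂)
    (mayerVietorisLeft_injective J₁ J₂) (mayerVietorisRight_surjective J₁ J₂)
    (mayerVietoris_exact a b) (mayerVietorisLeft_injective a b) (mayerVietorisRight_surjective a b)
    (a := Submodule.factor (inf_le_inf ha hb))
    (b := LinearMap.prodMap (Submodule.factor ha) (Submodule.factor hb))
    (c := Submodule.factor (sup_le_sup ha hb)) (by ext <;> rfl) (by ext <;> rfl) φ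
  rw [hl, extPullback_comp, hφ, map_zero, map_zero] at hnat
  refine eq_zero_of_extPullback_eq_zero (Submodule.factor_surjective _) (fun ψ ↦ ?_) hnat
  refine hvanish _ (hrad.trans (Ideal.radical_mono ?_)) n n.lt_succ_self ψ
  exact (Ideal.annihilator_quotient (I := a ⊔ b)).ge.trans
    (LinearMap.annihilator_le_of_injective _ (Submodule.subtype_injective _))

end MayerVietoris

/-! ### Projective dimension of quotients by monomial ideals -/

section ColonSequence

variable {R : Type u} [CommRing R] {I J Y : Ideal R} {v : R} {n : ℕ}

theorem quotient_mapQ_lsmul_injective (h : ∀ r, v * r ∈ J ↔ r ∈ Y) :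
    Function.Injective (Submodule.mapQ Y J (LinearMap.lsmul R R v) fun r hr ↦ (h r).2 hr) := by
  refine (injective_iff_map_eq_zero _).2 fun z hz ↦ ?_
  obtain ⟨z, rfl⟩ := Y.mkQ_surjective z
  exact (Submodule.Quotient.mk_eq_zero Y).2 ((h z).1 ((Submodule.Quotient.mk_eq_zero J).1 hz))

theorem quotient_mapQ_lsmul_exact (h : ∀ r, v * r ∈ J ↔ r ∈ Y) :
    Function.Exact (Submodule.mapQ Y J (LinearMap.lsmul R R v) fun r hr ↦ (h r).2 hr)
      (Submodule.factor (le_sup_left : J ≤ J ⊔ Ideal.span {v})) := by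
  intro z
  obtain ⟨z, rfl⟩ := J.mkQ_surjective z
  change (J ⊔ Ideal.span {v}).mkQ z = 0 ↔ _
  constructor
  · intro hz
    obtain ⟨p, hp, q, hq, rfl⟩ := Submodule.mem_sup.1 ((Submodule.Quotient.mk_eq_zero _).1 hz)
    obtain ⟨y, rfl⟩ := Ideal.mem_span_singleton.1 hq
    refine ⟨Y.mkQ y, ?_⟩
    change J.mkQ (v * y) = J.mkQ (p + v * y)
    rw [map_add, right_eq_add]
    exact (Submodule.Quotient.mk_eq_zero J).2 hp
  · rintro ⟨y, hy⟩
    obtain ⟨y, rfl⟩ := Y.mkQ_surjective y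
    have hvy : z - v * y ∈ J := (Submodule.Quotient.eq J).1 hy.symm
    refine (Submodule.Quotient.mk_eq_zero _).2 (Submodule.mem_sup.2 ⟨_, hvy, v * y, ?_, ?_⟩)
    · exact Ideal.mem_span_singleton.2 (dvd_mul_right v y)
    · exact sub_add_cancel z (v * y)

theorem hasProjectiveDimensionLT_quotient_of_colon (h : ∀ r, v * r ∈ J ↔ r ∈ Y)
    (hY : HasProjectiveDimensionLT (ModuleCat.of R (R ⧸ Y)) n)
    (hv : HasProjectiveDimensionLT (ModuleCat.of R (R ⧸ J ⊔ Ideal.span {v})) n) :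
    HasProjectiveDimensionLT (ModuleCat.of R (R ⧸ J)) n :=
  (shortExact_of_exact (quotient_mapQ_lsmul_exact h) (quotient_mapQ_lsmul_injective h)
    (Submodule.factor_surjective _)).hasProjectiveDimensionLT_X₂ n hY hv

theorem hasProjectiveDimensionLT_quotient_sup_span_singleton (hv : ∀ r, v * r ∈ I → r ∈ I)
    (hI : HasProjectiveDimensionLT (ModuleCat.of R (R ⧸ I)) n) :
    HasProjectiveDimensionLT (ModuleCat.of R (R ⧸ I ⊔ Ideal.span {v})) (n + 1) :=
  have h (r : R) : v * r ∈ I ↔ r ∈ I := ⟨hv r, I.mul_mem_left v⟩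
  (shortExact_of_exact (quotient_mapQ_lsmul_exact h) (quotient_mapQ_lsmul_injective h)
    (Submodule.factor_surjective _)).hasProjectiveDimensionLT_X₃ n hI
      (hasProjectiveDimensionLT_of_ge _ n (n + 1) n.le_succ)

theorem hasProjectiveDimensionLT_quotient_sup_span_singleton_mul (hIY : I ≤ Y)
    (hv : ∀ r, v * r ∈ I → r ∈ I) (hI : HasProjectiveDimensionLT (ModuleCat.of R (R ⧸ I)) n)
    (hY : HasProjectiveDimensionLT (ModuleCat.of R (R ⧸ Y)) (n + 1)) :
    HasProjectiveDimensionLT (ModuleCat.of R (R ⧸ I ⊔ Ideal.span {v} * Y)) (n + 1) := by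
  have hsup : I ⊔ Ideal.span {v} * Y ⊔ Ideal.span {v} = I ⊔ Ideal.span {v} := by
    rw [sup_assoc, sup_of_le_right (Ideal.mul_le_left : Ideal.span {v} * Y ≤ _)]
  refine hasProjectiveDimensionLT_quotient_of_colon (v := v) (fun r ↦ ⟨fun hr ↦ ?_, fun hr ↦ ?_⟩)
    hY (hsup ▸ hasProjectiveDimensionLT_quotient_sup_span_singleton hv hI)
  · obtain ⟨p, hp, q, hq, hpq⟩ := Submodule.mem_sup.1 hr
    obtain ⟨y, hy, rfl⟩ := Ideal.mem_span_singleton_mul.1 hq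
    have hry : r - y ∈ I := hv _ (by rwa [show v * (r - y) = p by linear_combination -hpq])
    exact (Y.sub_mem_iff_left hy).1 (hIY hry)
  · exact Ideal.mem_sup_right (Ideal.mul_mem_mul (Ideal.mem_span_singleton_self v) hr)

theorem HasDepth.quotient_of_sup_span_singleton {m : Ideal R} (hvm : v ∈ m)
    (hv : ∀ r, v * r ∈ I → r ∈ I) (h : HasDepth m n (R ⧸ I ⊔ Ideal.span {v})) :
    HasDepth m (n + 1) (R ⧸ I) := by
  have hiff (r : R) : v * r ∈ I ↔ r ∈ I := ⟨hv r, I.mul_mem_left v⟩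
  have hmap : LinearMap.lsmul R (R ⧸ I) v =
      Submodule.mapQ I I (LinearMap.lsmul R R v) fun r hr ↦ (hiff r).2 hr := by
    ext
    rfl
  refine h.succ hvm (π := Submodule.factor le_sup_left) ?_ ?_ (Submodule.factor_surjective _)
  · exact hmap ▸ quotient_mapQ_lsmul_injective hiff
  · exact hmap ▸ quotient_mapQ_lsmul_exact hiff

theorem hasProjectiveDimensionLT_quotient_bot :
    HasProjectiveDimensionLT (ModuleCat.of R (R ⧸ (⊥ : Ideal R))) 1 :=
  projective_iff_hasProjectiveDimensionLT_one.1 <| ModuleCat.projective_of_free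
    ((Module.Basis.singleton Unit R).map (Submodule.quotEquivOfEqBot ⊥ rfl).symm)

end ColonSequence

section VariableIdeal

variable {σ K : Type*} [Field K] {v : σ}

theorem mem_of_X_mul_mem_span_monomial {S : Set (σ →₀ ℕ)} (hS : ∀ s ∈ S, s v = 0)
    (r : MvPolynomial σ K) (h : X v * r ∈ Ideal.span ((fun s ↦ monomial s (1 : K)) '' S)) :
    r ∈ Ideal.span ((fun s ↦ monomial s (1 : K)) '' S) := by
  classical
  rw [mem_ideal_span_monomial_image] at h ⊢
  intro a ha
  obtain ⟨s, hs, hsa⟩ := h (Finsupp.single v 1 + a) (by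
    rwa [mem_support_iff, coeff_X_mul, ← mem_support_iff])
  refine ⟨s, hs, fun w ↦ ?_⟩
  rcases eq_or_ne w v with rfl | hw
  · exact (hS s hs).le.trans (Nat.zero_le _)
  · simpa [Finsupp.single_apply, hw.symm] using hsa w

/-- The ideal generated by the variables in `U`. -/
noncomputable def varIdeal (K : Type*) [Field K] (U : Set σ) : Ideal (MvPolynomial σ K) :=
  Ideal.span (X '' U)

variable {U : Set σ}

theorem X_mem_varIdeal (h : v ∈ U) : (X v : MvPolynomial σ K) ∈ varIdeal K U :=
  Ideal.subset_span ⟨v, h, rfl⟩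

theorem varIdeal_mono {W : Set σ} (h : U ⊆ W) : varIdeal K U ≤ varIdeal K W :=
  Ideal.span_mono (Set.image_mono h)

theorem varIdeal_union (U W : Set σ) : varIdeal K (U ∪ W) = varIdeal K U ⊔ varIdeal K W := by
  rw [varIdeal, Set.image_union, Ideal.span_union, ← varIdeal, ← varIdeal]

theorem varIdeal_insert (v : σ) (U : Set σ) :
    varIdeal K (insert v U) = varIdeal K U ⊔ Ideal.span {X v} := by
  rw [varIdeal, Set.image_insert_eq, Ideal.span_insert, sup_comm, ← varIdeal]

theorem varIdeal_ne_top (U : Set σ) : varIdeal K U ≠ ⊤ := by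
  rw [Ideal.ne_top_iff_one, varIdeal, mem_ideal_span_X_image]
  simp

theorem mem_varIdeal_of_X_mul_mem (hv : v ∉ U) (r : MvPolynomial σ K)
    (h : X v * r ∈ varIdeal K U) : r ∈ varIdeal K U := by
  have heq : varIdeal K U =
      Ideal.span ((fun s ↦ monomial s (1 : K)) '' ((fun i ↦ Finsupp.single i 1) '' U)) := by
    rw [varIdeal, Set.image_image]
    rfl
  rw [heq] at h ⊢
  refine mem_of_X_mul_mem_span_monomial ?_ r h
  rintro _ ⟨i, hi, rfl⟩
  exact Finsupp.single_eq_of_ne (ne_of_mem_of_not_mem hi hv).symm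

theorem hasProjectiveDimensionLT_quotient_varIdeal (U : Finset σ) :
    HasProjectiveDimensionLT
      (ModuleCat.of (MvPolynomial σ K) (MvPolynomial σ K ⧸ varIdeal K (U : Set σ)))
      (U.card + 1) := by
  classical
  induction U using Finset.induction_on with
  | empty =>
    rw [Finset.coe_empty, varIdeal, Set.image_empty, Ideal.span_empty]
    exact hasProjectiveDimensionLT_quotient_bot
  | insert v U hv ih =>
    rw [Finset.coe_insert, varIdeal_insert, Finset.card_insert_of_notMem hv]
    exact hasProjectiveDimensionLT_quotient_sup_span_singleton (mem_varIdeal_of_X_mul_mem hv) ih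

theorem hasDepth_quotient_varIdeal_compl (T : Finset σ) :
    HasDepth (varIdeal K (Set.univ : Set σ)) T.card
      (MvPolynomial σ K ⧸ varIdeal K (T : Set σ)ᶜ) := by
  classical
  induction T using Finset.induction_on with
  | empty =>
    rw [Finset.coe_empty, Set.compl_empty]
    exact hasDepth_zero_quotient (varIdeal_ne_top _)
  | insert v T hv ih =>
    have hcompl : (T : Set σ)ᶜ = insert v ((insert v T : Finset σ) : Set σ)ᶜ := by
      ext w
      rcases eq_or_ne w v with rfl | hw <;> simp_all
    rw [Finset.card_insert_of_notMem hv]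
    rw [hcompl, varIdeal_insert] at ih
    exact ih.quotient_of_sup_span_singleton (X_mem_varIdeal (Set.mem_univ v))
      (mem_varIdeal_of_X_mul_mem (by simp))

theorem hasDepth_quotient_varIdeal_empty [Fintype σ] :
    HasDepth (varIdeal K (Set.univ : Set σ)) (Fintype.card σ)
      (MvPolynomial σ K ⧸ varIdeal K (∅ : Set σ)) := by
  have h := hasDepth_quotient_varIdeal_compl (K := K) (Finset.univ : Finset σ)
  rwa [Finset.coe_univ, Set.compl_univ, Finset.card_univ] at h

variable {I : Ideal (MvPolynomial σ K)}

theorem sup_varIdeal_compl_mul_le {A B : Set σ} (hI : ∀ x ∈ A, ∀ y ∈ B, X x * X y ∈ I) :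
    (I ⊔ varIdeal K Aᶜ) * (I ⊔ varIdeal K Bᶜ) ≤ I ⊔ varIdeal K (A ∪ B)ᶜ := by
  rw [Ideal.sup_mul, Ideal.mul_sup (varIdeal K Aᶜ)]
  refine sup_le (Ideal.mul_le_left.trans le_sup_left)
    (sup_le (Ideal.mul_le_right.trans le_sup_left) ?_)
  rw [varIdeal, varIdeal, Ideal.span_mul_span', Ideal.span_le]
  rintro _ ⟨_, ⟨y, hy, rfl⟩, _, ⟨x, hx, rfl⟩, rfl⟩
  change X y * X x ∈ _
  by_cases hyB : y ∈ B
  · by_cases hxA : x ∈ A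
    · exact Ideal.mem_sup_left (by rw [mul_comm]; exact hI x hxA y hyB)
    · exact Ideal.mem_sup_right (Ideal.mul_mem_left _ _ (X_mem_varIdeal (by simp_all)))
  · exact Ideal.mem_sup_right (Ideal.mul_mem_right _ _ (X_mem_varIdeal (by simp_all)))

theorem radical_sup_varIdeal_compl_inf {A B : Set σ} (hI : ∀ x ∈ A, ∀ y ∈ B, X x * X y ∈ I) :
    ((I ⊔ varIdeal K Aᶜ) ⊓ (I ⊔ varIdeal K Bᶜ)).radical = (I ⊔ varIdeal K (A ∪ B)ᶜ).radical := by
  refine le_antisymm ?_ (Ideal.radical_mono (le_inf ?_ ?_))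
  · rw [Ideal.radical_inf, ← Ideal.radical_mul]
    exact Ideal.radical_mono (sup_varIdeal_compl_mul_le hI)
  · exact sup_le_sup_left (varIdeal_mono (by simp)) I
  · exact sup_le_sup_left (varIdeal_mono (by simp)) I

theorem sup_varIdeal_compl_sup {A B : Set σ} (hAB : Disjoint A B) (hI : I ≤ varIdeal K Set.univ) :
    (I ⊔ varIdeal K Aᶜ) ⊔ (I ⊔ varIdeal K Bᶜ) = varIdeal K Set.univ := by
  rw [← sup_sup_distrib_left, ← varIdeal_union, ← Set.compl_inter,
    Set.disjoint_iff_inter_eq_empty.1 hAB, Set.compl_empty]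
  exact sup_of_le_right hI

theorem hasProjectiveDimensionLT_quotient_varIdeal_compl_singleton [Fintype σ] (v : σ) :
    HasProjectiveDimensionLT
      (ModuleCat.of (MvPolynomial σ K) (MvPolynomial σ K ⧸ varIdeal K ({v}ᶜ : Set σ)))
      (Fintype.card σ) := by
  classical
  have h := hasProjectiveDimensionLT_quotient_varIdeal (K := K) ({v}ᶜ : Finset σ)
  rwa [Finset.card_compl, Finset.card_singleton, Nat.sub_add_cancel (Fintype.card_pos_iff.2 ⟨v⟩),
    Finset.coe_compl, Finset.coe_singleton] at h

/- Modulo the variables outside `A ∪ B`, the variety of `I` is the union of two coordinate subspaces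
meeting in the origin, to which the Mayer–Vietoris bound applies. The module
`R ⧸ varIdeal K ∅` is the polynomial ring itself, in the form produced by the induction on depth. -/
theorem CohomDimLE.card_add_card_le [Finite σ] {A B : Finset σ} {s : ℕ} (hAB : Disjoint A B)
    (hA : A.Nonempty) (hB : B.Nonempty) (hI : ∀ v, I ≤ varIdeal K {v}ᶜ)
    (hIAB : ∀ x ∈ A, ∀ y ∈ B, X x * X y ∈ I)
    (hcd : CohomDimLE (ModuleCat.of _ (MvPolynomial σ K ⧸ varIdeal K (∅ : Set σ))) I s) :
    A.card + B.card ≤ s + 1 := by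
  classical
  have := Fintype.ofFinite σ
  obtain ⟨a, ha⟩ := hA
  obtain ⟨b, hb⟩ := hB
  obtain ⟨n, hn⟩ := Nat.exists_eq_add_one.2 (Fintype.card_pos_iff.2 ⟨a⟩)
  have hJP (T : Finset σ) (t : σ) (ht : t ∈ T) : I ⊔ varIdeal K (T : Set σ)ᶜ ≤ varIdeal K {t}ᶜ :=
    sup_le (hI t) (varIdeal_mono (Set.compl_subset_compl.2 (by simpa using ht)))
  have hsup : (I ⊔ varIdeal K (A : Set σ)ᶜ) ⊔ (I ⊔ varIdeal K (B : Set σ)ᶜ) =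
      varIdeal K Set.univ :=
    sup_varIdeal_compl_sup (Finset.disjoint_coe.2 hAB)
      ((hI a).trans (varIdeal_mono (Set.subset_univ _)))
  have hcdJ := hcd.sup_span_finset (A ∪ B)ᶜ X
  rw [Finset.coe_compl, Finset.coe_union, ← varIdeal] at hcdJ
  have hle := (hcdJ.congr (radical_sup_varIdeal_compl_inf hIAB).symm).le_of_hasDepth
    (by rw [hsup, ← hn]; exact hasDepth_quotient_varIdeal_empty)
    (hJP A a ha) (hsup ▸ varIdeal_mono (Set.subset_univ _))
    (by rw [← hn]; exact hasProjectiveDimensionLT_quotient_varIdeal_compl_singleton a)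
    (hJP B b hb) (hsup ▸ varIdeal_mono (Set.subset_univ _))
    (by rw [← hn]; exact hasProjectiveDimensionLT_quotient_varIdeal_compl_singleton b)
  have hcard := Finset.card_add_card_compl (A ∪ B)
  rw [Finset.card_union_of_disjoint hAB] at hcard
  omega

end VariableIdeal

/-! ### Cohomological dimension of monomial ideals -/

section FlatBaseChange

theorem hasProjectiveDimensionLT_obj {C D : Type*} [Category* C] [Category* D] [Abelian C]
    [Abelian D] [EnoughProjectives C] (F : C ⥤ D) [F.Additive] [Limits.PreservesFiniteLimits F]
    [Limits.PreservesFiniteColimits F] [F.PreservesProjectiveObjects] {M : C} {n : ℕ}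
    (hM : HasProjectiveDimensionLT M n) : HasProjectiveDimensionLT (F.obj M) n := by
  induction n generalizing M with
  | zero =>
    rw [hasProjectiveDimensionLT_zero_iff_isZero] at hM ⊢
    exact F.map_isZero hM
  | succ n ih =>
    rcases n with _ | n
    · rw [← projective_iff_hasProjectiveDimensionLT_one] at hM ⊢
      exact F.projective_obj_of_projective hM
    · have hS : (ShortComplex.mk _ (Projective.π M) (Limits.kernel.condition _)).ShortExact :=
        { exact := ShortComplex.exact_kernel (Projective.π M) }
      have hP : Projective (Projective.over M) := inferInstance
      refine ((hS.map_of_exact F).hasProjectiveDimensionLT_X₃_iff n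
        (F.projective_obj_of_projective hP)).2 (ih ?_)
      exact (hS.hasProjectiveDimensionLT_X₃_iff n hP).1 hM

theorem hasProjectiveDimensionLT_quotient_map_of_flat {R S : Type u} [CommRing R] [CommRing S]
    {f : R →+* S} (hf : f.Flat) {I : Ideal R} {n : ℕ}
    (h : HasProjectiveDimensionLT (ModuleCat.of R (R ⧸ I)) n) :
    HasProjectiveDimensionLT (ModuleCat.of S (S ⧸ I.map f)) n := by
  have := ModuleCat.preservesFiniteLimits_extendScalars_of_flat hf
  have : (ModuleCat.extendScalars.{u, u, u} f).PreservesProjectiveObjects :=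
    Functor.preservesProjectiveObjects_of_adjunction_of_preservesEpimorphisms
      (ModuleCat.extendRestrictScalarsAdj f)
  have : (ModuleCat.extendScalars.{u, u, u} f).Additive :=
    (ModuleCat.extendRestrictScalarsAdj f).left_adjoint_additive
  have hS := hasProjectiveDimensionLT_obj (ModuleCat.extendScalars.{u, u, u} f) h
  algebraize [f]
  have e : S ⊗[R] (R ⧸ I) ≃ₗ[S] S ⧸ I.map (algebraMap R S) :=
    (Algebra.TensorProduct.quotIdealMapEquivTensorQuot S I).symm.toLinearEquiv
  have : HasProjectiveDimensionLT (ModuleCat.of S (S ⊗[R] (R ⧸ I))) n := hS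
  exact hasProjectiveDimensionLT_of_iso e.toModuleIso n

theorem exists_surjective_pi_quotient {R N : Type*} [CommRing R] [AddCommGroup N] [Module R N]
    [Module.Finite R N] {J : Ideal R} (hJ : J ≤ Module.annihilator R N) :
    ∃ (n : ℕ) (π : (Fin n → R ⧸ J) →ₗ[R] N), Function.Surjective π := by
  obtain ⟨n, y, hy⟩ := Module.Finite.exists_fin (R := R) (M := N)
  let lift (j : Fin n) : R ⧸ J →ₗ[R] N := J.liftQ (LinearMap.toSpanSingleton R N (y j)) fun r hr ↦
    Module.mem_annihilator.1 (hJ hr) (y j)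
  refine ⟨n, LinearMap.lsum R (fun _ ↦ R ⧸ J) R lift, LinearMap.range_eq_top.1 (top_le_iff.1 ?_)⟩
  rw [← hy, Submodule.span_le]
  rintro _ ⟨j, rfl⟩
  refine ⟨Pi.single j (J.mkQ 1), ?_⟩
  rw [LinearMap.lsum_piSingle]
  exact one_smul R (y j)

end FlatBaseChange

section Expand

variable {σ K : Type*} [Field K] {k : ℕ}

theorem coeff_expand_mul_monomial [DecidableEq σ] (hk : k ≠ 0) {e e' : σ →₀ ℕ}
    (he : ∀ i, e i < k) (he' : ∀ i, e' i < k) (d : σ →₀ ℕ) (p : MvPolynomial σ K) :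
    coeff (k • d + e') (expand k p * monomial e 1) = if e = e' then coeff d p else 0 := by
  rw [coeff_mul_monomial', mul_one]
  split_ifs with hle hee hee
  · rw [hee, add_tsub_cancel_right, coeff_expand_smul k hk]
  · obtain ⟨i, hi⟩ := DFunLike.ne_iff.1 hee
    refine coeff_expand_of_not_dvd p (i := i) fun hdvd ↦ hi ?_
    have hei : k * d i + e' i - e i + e i = k * d i + e' i := Nat.sub_add_cancel (hle i)
    have hmod : e i ≡ e' i [MOD k] := calc
      e i = 0 + e i := (zero_add _).symm
      _ ≡ k * d i + e' i - e i + e i [MOD k] :=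
        ((Nat.modEq_zero_iff_dvd.2 hdvd).add_right (e i)).symm
      _ ≡ e' i [MOD k] := by rw [hei]; simp [Nat.ModEq]
    exact Nat.ModEq.eq_of_lt_of_lt hmod (he i) (he' i)
  · exact absurd (hee ▸ le_add_self) hle
  · rfl

theorem exists_eq_smul_add_of_ne_zero (hk : k ≠ 0) (s : σ →₀ ℕ) :
    ∃ d e : σ →₀ ℕ, (∀ i, e i < k) ∧ s = k • d + e :=
  ⟨s.mapRange (· / k) (Nat.zero_div k), s.mapRange (· % k) (Nat.zero_mod k),
    fun _ ↦ Nat.mod_lt _ (Nat.pos_of_ne_zero hk),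
    Finsupp.ext fun i ↦ (Nat.div_add_mod (s i) k).symm⟩

theorem flat_of_exists_unique_sum {R S ι : Type*} [CommRing R] [CommRing S] {f : R →+* S}
    (b : ι → S) (hindep : ∀ c : ι →₀ R, (c.sum fun i r ↦ f r * b i) = 0 → c = 0)
    (hspan : ∀ s, ∃ c : ι →₀ R, (c.sum fun i r ↦ f r * b i) = s) : f.Flat := by
  algebraize [f]
  have hb : LinearIndependent R b :=
    (injective_iff_map_eq_zero (Finsupp.linearCombination R b)).2 hindep
  have := Module.Free.of_basis (Module.Basis.mk hb fun s _ ↦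
    (Finsupp.mem_span_range_iff_exists_finsupp).2 (hspan s))
  exact Module.Flat.of_free

theorem flat_expand (hk : k ≠ 0) : (expand k : MvPolynomial σ K →ₐ[K] _).toRingHom.Flat := by
  classical
  refine flat_of_exists_unique_sum
    (fun e : {e : σ →₀ ℕ // ∀ i, e i < k} ↦ monomial (e : σ →₀ ℕ) (1 : K))
    (fun c hc ↦ ?_) fun p ↦ ?_
  · ext e' d
    have h := congrArg (coeff (k • d + e'.1)) hc
    have hcoeff : ∀ e ∈ c.support, coeff (k • d + e'.1)
        ((expand k : MvPolynomial σ K →ₐ[K] _).toRingHom (c e) * monomial e.1 1) =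
          if e = e' then coeff d (c e) else 0 := fun e _ ↦
      (coeff_expand_mul_monomial hk e.2 e'.2 d (c e)).trans (by simp only [Subtype.coe_inj])
    rw [Finsupp.sum, coeff_sum, coeff_zero, Finset.sum_congr rfl hcoeff, Finset.sum_ite_eq'] at h
    by_cases hce' : c e' = 0
    · simp [hce']
    · rwa [if_pos (Finsupp.mem_support_iff.2 hce')] at h
  · induction p using MvPolynomial.induction_on' with
    | monomial s a =>
      obtain ⟨d, e, he, rfl⟩ := exists_eq_smul_add_of_ne_zero hk s
      exact ⟨Finsupp.single ⟨e, he⟩ (monomial d a), by simp [Finsupp.sum_single_index]⟩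
    | add p q hp hq =>
      obtain ⟨c, rfl⟩ := hp
      obtain ⟨c', rfl⟩ := hq
      exact ⟨c + c', Finsupp.sum_add_index' (by simp) (by simp [add_mul])⟩

variable {S : Set (σ →₀ ℕ)}

theorem expand_monomial_one (s : σ →₀ ℕ) :
    expand k (monomial s (1 : K)) = monomial s 1 ^ k := by
  rw [expand_monomial, monomial_pow, one_pow]

theorem map_expand_span_monomial_le_pow :
    (Ideal.span ((fun s ↦ monomial s (1 : K)) '' S)).map (expand k) ≤
      Ideal.span ((fun s ↦ monomial s (1 : K)) '' S) ^ k := by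
  rw [Ideal.map_span, Ideal.span_le]
  rintro _ ⟨_, ⟨s, hs, rfl⟩, rfl⟩
  have hpow := Ideal.pow_mem_pow (Ideal.subset_span (Set.mem_image_of_mem
    (fun s ↦ monomial s (1 : K)) hs)) k
  rwa [← expand_monomial_one] at hpow

theorem span_monomial_le_radical_map_expand :
    Ideal.span ((fun s ↦ monomial s (1 : K)) '' S) ≤
      ((Ideal.span ((fun s ↦ monomial s (1 : K)) '' S)).map (expand k)).radical := by
  rw [Ideal.span_le]
  rintro _ ⟨s, hs, rfl⟩
  refine ⟨k, ?_⟩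
  have hmap := Ideal.mem_map_of_mem (expand k) (Ideal.subset_span (Set.mem_image_of_mem
    (fun s ↦ monomial s (1 : K)) hs))
  rwa [expand_monomial_one] at hmap

/- Lyubeznik's argument: the ideals `I^[k]` obtained from a monomial ideal `I` by the flat
substitution `X ↦ X ^ k` are cofinal among the powers of `I`, and `pd R/I^[k] ≤ pd R/I`. -/
theorem cohomDimLE_span_monomial [Finite σ] {s : ℕ} (M : ModuleCat (MvPolynomial σ K))
    (h : HasProjectiveDimensionLT (ModuleCat.of (MvPolynomial σ K)
      (MvPolynomial σ K ⧸ Ideal.span ((fun s ↦ monomial s (1 : K)) '' S))) (s + 1)) :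
    CohomDimLE M (Ideal.span ((fun s ↦ monomial s (1 : K)) '' S)) s := by
  intro N _ _ _ hN i hi θ
  obtain ⟨k, hk⟩ := Ideal.exists_pow_le_of_le_radical_of_fg hN (IsNoetherian.noetherian _)
  set I := Ideal.span ((fun s ↦ monomial s (1 : K)) '' S)
  let J := I.map (expand (k + 1))
  have hJN : J ≤ Module.annihilator (MvPolynomial σ K) N :=
    map_expand_span_monomial_le_pow.trans ((Ideal.pow_le_pow_right k.le_succ).trans hk)
  have hJ : HasProjectiveDimensionLT
      (ModuleCat.of (MvPolynomial σ K) (MvPolynomial σ K ⧸ J)) (s + 1) :=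
    hasProjectiveDimensionLT_quotient_map_of_flat (flat_expand k.succ_ne_zero) h
  obtain ⟨n, π, hπ⟩ := exists_surjective_pi_quotient hJN
  refine ⟨ModuleCat.of _ (Fin n → MvPolynomial σ K ⧸ J),
    inferInstanceAs (Module.Finite _ (Fin n → _)), π, hπ, ?_,
    ext_pi_eq_zero (fun η ↦ Ext.eq_zero_of_hasProjectiveDimensionLT η (s + 1) hi) _⟩
  refine (span_monomial_le_radical_map_expand (k := k + 1)).trans (Ideal.radical_mono fun r hr ↦
    Module.mem_annihilator.2 fun x ↦ funext fun j ↦ ?_)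
  exact Module.mem_annihilator.1 ((Ideal.annihilator_quotient (I := J)).ge hr) (x j)

end Expand

/-! ### The Koszul complex of the variables -/

section Koszul

variable {σ : Type*} [LinearOrder σ]

/-- The sign with which the basis vector `e_t` is pulled out of the wedge `e_{T ∪ {t}}`. -/
def koszulSign (T : Finset σ) (t : σ) : ℤˣ := (-1) ^ (T.filter (· < t)).card

theorem koszulSign_insert_of_lt {T : Finset σ} {s t : σ} (hs : s ∉ T) (hst : s < t) :
    koszulSign (insert s T) t = -koszulSign T t := by
  rw [koszulSign, koszulSign, Finset.filter_insert, if_pos hst,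
    Finset.card_insert_of_notMem (by simp [hs]), pow_succ, mul_neg_one]

theorem koszulSign_insert_of_le {T : Finset σ} {s t : σ} (hts : t ≤ s) :
    koszulSign (insert s T) t = koszulSign T t := by
  rw [koszulSign, koszulSign, Finset.filter_insert, if_neg hts.not_gt]

theorem koszulSign_of_forall_le {T : Finset σ} {t : σ} (h : ∀ s ∈ T, t ≤ s) :
    koszulSign T t = 1 := by
  rw [koszulSign, Finset.filter_eq_empty_iff.2 fun s hs ↦ (h s hs).not_gt, Finset.card_empty,
    pow_zero]

theorem koszulSign_mul_koszulSign_insert {T : Finset σ} {s t : σ} (hs : s ∉ T) (ht : t ∉ T)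
    (hst : s ≠ t) : koszulSign T s * koszulSign (insert s T) t =
      -(koszulSign T t * koszulSign (insert t T) s) := by
  rcases hst.lt_or_gt with hlt | hlt
  · rw [koszulSign_insert_of_lt hs hlt, koszulSign_insert_of_le hlt.le, mul_neg, mul_comm]
  · rw [koszulSign_insert_of_lt ht hlt, koszulSign_insert_of_le hlt.le, mul_neg, neg_neg, mul_comm]

variable [Fintype σ] {R M N : Type*} [CommRing R] [AddCommGroup M] [Module R M] [AddCommGroup N]
  [Module R N]

/-- The differential of the Koszul complex of a family `x` with coefficients in `M`, where the
element `∑ T, f T ⊗ e_T` is encoded by the function `f`. -/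
def koszulD (x : σ → R) : (Finset σ → M) →ₗ[R] Finset σ → M where
  toFun f T := ∑ t ∈ Tᶜ, koszulSign T t • x t • f (insert t T)
  map_add' f g := by ext T; simp [Finset.sum_add_distrib]
  map_smul' r f := by
    ext T
    simp [Finset.smul_sum, smul_comm _ r]

theorem koszulD_apply (x : σ → R) (f : Finset σ → M) (T : Finset σ) :
    koszulD x f T = ∑ t ∈ Tᶜ, koszulSign T t • x t • f (insert t T) := rfl

theorem koszulD_comp (x : σ → R) (φ : M →ₗ[R] N) (f : Finset σ → M) (T : Finset σ) :
    koszulD x (φ ∘ f) T = φ (koszulD x f T) := by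
  simp [koszulD_apply, map_sum, Units.smul_def]

theorem koszulD_koszulD (x : σ → R) (f : Finset σ → M) : koszulD x (koszulD x f) = 0 := by
  ext T
  simp only [koszulD_apply, Finset.smul_sum, Pi.zero_apply]
  rw [Finset.sum_sigma']
  have hmem {p : (_ : σ) × σ} : (p ∈ Tᶜ.sigma fun s ↦ (insert s T)ᶜ) ↔
      p.1 ∉ T ∧ p.2 ≠ p.1 ∧ p.2 ∉ T := by
    simp
  refine Finset.sum_involution (fun p _ ↦ ⟨p.2, p.1⟩) (fun ⟨s, t⟩ hp ↦ ?_) (fun p hp _ heq ↦ ?_)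
    (fun p hp ↦ ?_) fun _ _ ↦ rfl
  · obtain ⟨hs, hts, ht⟩ := hmem.1 hp
    dsimp only at hs hts ht ⊢
    rw [Finset.insert_comm t s T, smul_comm (x s), smul_comm (x t), smul_comm (x t) (x s),
      smul_smul, smul_smul, koszulSign_mul_koszulSign_insert hs ht hts.symm, Units.neg_smul,
      mul_smul, neg_add_cancel]
  · exact (hmem.1 hp).2.1 (congrArg Sigma.fst heq)
  · exact hmem.2 ⟨(hmem.1 hp).2.2, (hmem.1 hp).2.1.symm, (hmem.1 hp).1⟩

theorem koszulD_update_empty (x : σ → R) (f : Finset σ → M) (m : M) :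
    koszulD x (Function.update f ∅ m) = koszulD x f := by
  ext T
  refine Finset.sum_congr rfl fun t _ ↦ ?_
  rw [Function.update_of_ne (Finset.insert_ne_empty t T)]

theorem koszulD_eq_zero_of_card_ne {x : σ → R} {f : Finset σ → M} {n : ℕ}
    (hf : ∀ T, T.card ≠ n → f T = 0) {T : Finset σ} (hT : T.card + 1 ≠ n) :
    koszulD x f T = 0 := by
  refine Finset.sum_eq_zero fun t ht ↦ ?_
  rw [hf _ (by rwa [Finset.card_insert_of_notMem (Finset.mem_compl.1 ht)]), smul_zero, smul_zero]

end Koszul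

section KoszulExact

variable {σ : Type*} {K : Type*} [CommRing K]

theorem exists_coeff_eq_ite (p : MvPolynomial σ K) (P : (σ →₀ ℕ) → Prop) [DecidablePred P] :
    ∃ q : MvPolynomial σ K, ∀ b, coeff b q = if P b then coeff b p else 0 := by
  classical
  refine ⟨∑ a ∈ p.support.filter P, monomial a (coeff a p), fun b ↦ ?_⟩
  simp only [coeff_sum, coeff_monomial, Finset.sum_ite_eq', Finset.mem_filter, mem_support_iff]
  by_cases hb : coeff b p = 0 <;> simp [hb]

variable [LinearOrder σ] {f g : Finset σ → MvPolynomial σ K} {T : Finset σ} {b : σ →₀ ℕ} {v : σ}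

theorem support_sub_single_union_insert {t : σ} (ht : t ∈ b.support) :
    (b - Finsupp.single t 1).support ∪ insert t T = b.support ∪ T := by
  ext w
  rcases eq_or_ne w t with rfl | hw
  · simp_all
  · simp [hw]

/-- In a fixed multidegree the Koszul complex of the variables is the chain complex of a full
simplex. The predicate says that `g` arises from `f` by coning, in every multidegree, with the
least vertex `v` of that simplex; this contracts the complex. -/
def IsKoszulCone (f g : Finset σ → MvPolynomial σ K) : Prop :=
  ∀ (T : Finset σ) (b : σ →₀ ℕ) (v : σ), IsLeast (↑(b.support ∪ T) : Set σ) v →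
    coeff b (g T) = if v ∈ T then coeff (Finsupp.single v 1 + b) (f (T.erase v)) else 0

theorem exists_isKoszulCone (f : Finset σ → MvPolynomial σ K) : ∃ g, IsKoszulCone f g := by
  classical
  choose q hq using fun (T : Finset σ) (v : σ) ↦ exists_coeff_eq_ite
    (divMonomial (f (T.erase v)) (Finsupp.single v 1)) fun b ↦ IsLeast (↑(b.support ∪ T) : Set σ) v
  refine ⟨fun T ↦ ∑ v ∈ T, q T v, fun T b v hv ↦ ?_⟩
  have hiff (w : σ) : IsLeast (↑(b.support ∪ T) : Set σ) w ↔ w = v :=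
    ⟨fun hw ↦ hw.unique hv, (· ▸ hv)⟩
  simp only [coeff_sum, hq, hiff, coeff_divMonomial, Finset.sum_ite_eq']

variable [Fintype σ]

theorem coeff_koszulD (f : Finset σ → MvPolynomial σ K) (T : Finset σ) (b : σ →₀ ℕ) :
    coeff b (koszulD (X (R := K)) f T) = ∑ t ∈ b.support \ T,
      koszulSign T t • coeff (b - Finsupp.single t 1) (f (insert t T)) := by
  have hset : b.support \ T = Tᶜ.filter (· ∈ b.support) := by
    ext t
    simp [and_comm]
  rw [koszulD_apply, coeff_sum, hset, Finset.sum_filter]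
  refine Finset.sum_congr rfl fun t _ ↦ ?_
  rw [Units.smul_def, coeff_smul, smul_eq_mul, coeff_X_mul', smul_ite, smul_zero, Units.smul_def]

theorem coeff_koszulD_cone_of_notMem (hg : IsKoszulCone f g)
    (hv : IsLeast (↑(b.support ∪ T) : Set σ) v) (hvT : v ∉ T) :
    coeff b (koszulD (X (R := K)) g T) = coeff b (f T) := by
  have hvb : v ∈ b.support := (Finset.mem_union.1 hv.1).resolve_right hvT
  have hleast {t : σ} (ht : t ∈ b.support \ T) :
      IsLeast (↑((b - Finsupp.single t 1).support ∪ insert t T) : Set σ) v := by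
    rwa [support_sub_single_union_insert (Finset.mem_sdiff.1 ht).1]
  have hvmem : v ∈ b.support \ T := Finset.mem_sdiff.2 ⟨hvb, hvT⟩
  rw [coeff_koszulD, Finset.sum_eq_single_of_mem v hvmem fun t ht htv ↦ ?_]
  · rw [hg _ _ v (hleast hvmem), if_pos (Finset.mem_insert_self v T), Finset.erase_insert hvT,
      koszulSign_of_forall_le fun s hs ↦ hv.2 (Finset.mem_union_right _ hs), one_smul,
      add_tsub_cancel_of_le]
    exact Finsupp.single_le_iff.2 (Nat.one_le_iff_ne_zero.2 (Finsupp.mem_support_iff.1 hvb))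
  · rw [hg _ _ v (hleast ht), if_neg, smul_zero]
    simp [hvT, htv.symm]

theorem coeff_koszulD_cone_of_mem (hf : koszulD (X (R := K)) f = 0) (hg : IsKoszulCone f g)
    (hv : IsLeast (↑(b.support ∪ T) : Set σ) v) (hvT : v ∈ T) :
    coeff b (koszulD (X (R := K)) g T) = coeff b (f T) := by
  have hsupp : (Finsupp.single v 1 + b).support \ T.erase v = insert v (b.support \ T) := by
    ext t
    rcases eq_or_ne t v with rfl | ht
    · simp
    · simp [ht]
  have hcycle := congrArg (coeff (Finsupp.single v 1 + b)) (congrFun hf (T.erase v))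
  rw [coeff_koszulD, Pi.zero_apply, coeff_zero, hsupp, Finset.sum_insert (by simp [hvT]),
    koszulSign_of_forall_le fun s hs ↦ hv.2 (Finset.mem_union_right _ (Finset.mem_of_mem_erase hs)),
    one_smul, add_tsub_cancel_left, Finset.insert_erase hvT] at hcycle
  rw [eq_neg_of_add_eq_zero_left hcycle, coeff_koszulD, ← Finset.sum_neg_distrib]
  refine Finset.sum_congr rfl fun t ht ↦ ?_
  obtain ⟨htb, htT⟩ := Finset.mem_sdiff.1 ht
  have htv : t ≠ v := fun h ↦ htT (h ▸ hvT)
  have hsign : koszulSign T t = -koszulSign (T.erase v) t := by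
    rw [← koszulSign_insert_of_lt (Finset.notMem_erase v T)
      ((hv.2 (Finset.mem_union_left _ htb)).lt_of_ne htv.symm), Finset.insert_erase hvT]
  rw [hg _ _ v (by rwa [support_sub_single_union_insert htb]),
    if_pos (Finset.mem_insert_of_mem hvT), Finset.erase_insert_of_ne htv, hsign, Units.neg_smul,
    add_tsub_assoc_of_le]
  exact Finsupp.single_le_iff.2 (Nat.one_le_iff_ne_zero.2 (Finsupp.mem_support_iff.1 htb))

theorem exists_koszulD_eq (hf : koszulD (X (R := K)) f = 0) (h0 : coeff 0 (f ∅) = 0) :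
    ∃ g, koszulD (X (R := K)) g = f := by
  obtain ⟨g, hg⟩ := exists_isKoszulCone f
  refine ⟨g, funext fun T ↦ MvPolynomial.ext _ _ fun b ↦ ?_⟩
  rcases (b.support ∪ T).eq_empty_or_nonempty with hempty | hne
  · rw [Finset.union_eq_empty, Finsupp.support_eq_empty] at hempty
    rw [hempty.1, hempty.2, h0, coeff_koszulD, Finsupp.support_zero, Finset.empty_sdiff,
      Finset.sum_empty]
  · have hv := (b.support ∪ T).isLeast_min' hne
    by_cases hvT : (b.support ∪ T).min' hne ∈ T
    · exact coeff_koszulD_cone_of_mem hf hg hv hvT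
    · exact coeff_koszulD_cone_of_notMem hg hv hvT

theorem exists_koszulD_eq_of_finsupp {ι : Type*} [Finite ι]
    {f : Finset σ → ι →₀ MvPolynomial σ K} (hf : koszulD (X (R := K)) f = 0)
    (h0 : ∀ j, coeff 0 (f ∅ j) = 0) : ∃ g, koszulD (X (R := K)) g = f := by
  have hcomp (j : ι) : ∃ g, koszulD (X (R := K)) g = fun T ↦ f T j :=
    exists_koszulD_eq (funext fun T ↦ (koszulD_comp (X (R := K)) (Finsupp.lapply j) f T).trans
      (by rw [hf, Pi.zero_apply, map_zero, Pi.zero_apply])) (h0 j)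
  choose g hg using hcomp
  refine ⟨fun T ↦ Finsupp.equivFunOnFinite.symm fun j ↦ g j T, funext fun T ↦
    Finsupp.ext fun j ↦ ?_⟩
  exact (koszulD_comp (X (R := K)) (Finsupp.lapply j) _ T).symm.trans (congrFun (hg j) T)

end KoszulExact

/-! ### Koszul homology of a ring with linear resolution -/

section LinearResolution

variable {σ K ι κ : Type*} [CommRing K]

theorem homogeneousComponent_mul_of_isHomogeneous {p q : MvPolynomial σ K} {D e : ℕ}
    (hq : q.IsHomogeneous e) :
    homogeneousComponent (D + e) (p * q) = homogeneousComponent D p * q := by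
  let _ := gradedAlgebra (σ := σ) (R := K)
  rw [← decomposition.decompose'_apply, ← decomposition.decompose'_apply]
  exact DirectSum.coe_decompose_mul_add_of_right_mem (homogeneousSubmodule σ K) (a := p) (i := D) hq

theorem map_mapRange_homogeneousComponent
    {δ : (κ →₀ MvPolynomial σ K) →ₗ[MvPolynomial σ K] ι →₀ MvPolynomial σ K} {e : ℕ}
    (hδ : ∀ b c, (δ (Finsupp.single b 1) c).IsHomogeneous e) (D : ℕ) (y : κ →₀ MvPolynomial σ K) :
    δ (Finsupp.mapRange.linearMap (homogeneousComponent D) y) =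
      Finsupp.mapRange.linearMap (homogeneousComponent (D + e)) (δ y) := by
  induction y using Finsupp.induction_linear with
  | zero => simp only [map_zero]
  | add f g hf hg => simp only [map_add, hf, hg]
  | single b p =>
    have hsmul (r : MvPolynomial σ K) : δ (Finsupp.single b r) = r • δ (Finsupp.single b 1) := by
      rw [← map_smul, Finsupp.smul_single, smul_eq_mul, mul_one]
    rw [Finsupp.mapRange.linearMap_apply, Finsupp.mapRange_single, hsmul p, hsmul]
    ext1 c
    exact (homogeneousComponent_mul_of_isHomogeneous (hδ b c)).symm

theorem exists_isHomogeneous_map_eq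
    {δ : (κ →₀ MvPolynomial σ K) →ₗ[MvPolynomial σ K] ι →₀ MvPolynomial σ K} {e D : ℕ}
    (hδ : ∀ b c, (δ (Finsupp.single b 1) c).IsHomogeneous e) {x : ι →₀ MvPolynomial σ K}
    (hx : x ∈ LinearMap.range δ) (hxD : ∀ c, (x c).IsHomogeneous (D + e)) :
    ∃ y, δ y = x ∧ ∀ c, (y c).IsHomogeneous D := by
  obtain ⟨y, rfl⟩ := hx
  refine ⟨Finsupp.mapRange.linearMap (homogeneousComponent D) y, ?_, fun c ↦
    homogeneousComponent_isHomogeneous D (y c)⟩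
  rw [map_mapRange_homogeneousComponent hδ]
  exact Finsupp.ext fun c ↦ homogeneousComponent_eq_self (hxD c)

variable [LinearOrder σ] [Fintype σ]

/-- Elements of homological degree `n` of the Koszul complex of the variables with coefficients in
a free module, all of whose coefficients are homogeneous of degree `D`. -/
def IsKoszulChain (n D : ℕ) (z : Finset σ → ι →₀ MvPolynomial σ K) : Prop :=
  (∀ T, T.card ≠ n → z T = 0) ∧ ∀ T c, (z T c).IsHomogeneous D

/-- Vanishing of the Koszul homology of the image of `δ` in homological degree `n` and internal
degree `D`, phrased with representatives in the source of `δ`. -/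
def KoszulExactAt (δ : (κ →₀ MvPolynomial σ K) →ₗ[MvPolynomial σ K] ι →₀ MvPolynomial σ K)
    (n D : ℕ) : Prop :=
  ∀ z, IsKoszulChain n D z → (∀ T, δ (koszulD (X (R := K)) z T) = 0) →
    ∃ w, ∀ T, δ (z T - koszulD (X (R := K)) w T) = 0

theorem IsKoszulChain.koszulD {n D : ℕ} {z : Finset σ → ι →₀ MvPolynomial σ K}
    (hz : IsKoszulChain (n + 1) D z) : IsKoszulChain n (D + 1) (koszulD (X (R := K)) z) := by
  refine ⟨fun T hT ↦ koszulD_eq_zero_of_card_ne hz.1 (by omega), fun T c ↦ ?_⟩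
  rw [← Finsupp.lapply_apply (R := MvPolynomial σ K), ← koszulD_comp, koszulD_apply]
  refine IsHomogeneous.sum _ _ _ fun t _ ↦ ?_
  rw [Units.smul_def, smul_eq_mul, mul_comm]
  exact (homogeneousSubmodule σ K _).smul_of_tower_mem _ ((hz.2 _ c).mul (isHomogeneous_X K t))

theorem KoszulExactAt.exists_sub_mem_range [Finite ι]
    {δ : (κ →₀ MvPolynomial σ K) →ₗ[MvPolynomial σ K] ι →₀ MvPolynomial σ K} {e D n : ℕ}
    (hδ : ∀ b c, (δ (Finsupp.single b 1) c).IsHomogeneous (e + 1)) (hexact : KoszulExactAt δ n D)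
    {z : Finset σ → ι →₀ MvPolynomial σ K} (hz : IsKoszulChain (n + 1) (D + e) z)
    (hrange : ∀ T, koszulD (X (R := K)) z T ∈ LinearMap.range δ) :
    ∃ w, ∀ T, z T - koszulD (X (R := K)) w T ∈ LinearMap.range δ := by
  have hlift (T : Finset σ) : ∃ y, δ y = koszulD (X (R := K)) z T ∧ (∀ c, (y c).IsHomogeneous D) ∧
      (T.card ≠ n → y = 0) := by
    by_cases hT : T.card = n
    · obtain ⟨y, hy, hyD⟩ := exists_isHomogeneous_map_eq hδ (hrange T) (hz.koszulD.2 T)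
      exact ⟨y, hy, hyD, fun h ↦ absurd hT h⟩
    · exact ⟨0, by rw [map_zero, hz.koszulD.1 T hT], fun _ ↦ isHomogeneous_zero σ K D, fun _ ↦ rfl⟩
  choose y hyz hyD hyn using hlift
  have hcomp : δ ∘ y = koszulD (X (R := K)) z := funext hyz
  obtain ⟨w', hw'⟩ := hexact y ⟨hyn, hyD⟩ fun T ↦ by
    rw [← koszulD_comp, hcomp, koszulD_koszulD, Pi.zero_apply]
  -- Normalised at `∅` so that `z - δ ∘ w` vanishes there, as exactness in degree `0` requires.
  let w := Function.update w' ∅ 0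
  have hcycle : koszulD (X (R := K)) (z - δ ∘ w) = 0 := by
    ext1 T
    rw [map_sub, Pi.sub_apply, koszulD_comp, koszulD_update_empty, ← hyz, ← map_sub, hw',
      Pi.zero_apply]
  obtain ⟨u, hu⟩ := exists_koszulD_eq_of_finsupp hcycle fun j ↦ by
    simp [w, hz.1 ∅ (by simp)]
  exact ⟨u, fun T ↦ ⟨w T, by rw [hu]; simp⟩⟩

theorem koszulExactAt_of_linear {ι : ℕ → Type*} [∀ i, Finite (ι i)]
    {d : ∀ i, (ι (i + 1) →₀ MvPolynomial σ K) →ₗ[MvPolynomial σ K] ι i →₀ MvPolynomial σ K}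
    (hd : ∀ i, LinearMap.ker (d i) = LinearMap.range (d (i + 1)))
    (hlin : ∀ i b c, (d (i + 1) (Finsupp.single b 1) c).IsHomogeneous 1) {D : ℕ} (hD : D ≠ 0)
    (n k : ℕ) : KoszulExactAt (d k) n D := by
  induction n generalizing k with
  | zero =>
    intro z hz _
    obtain ⟨w, hw⟩ := exists_koszulD_eq_of_finsupp
      (funext fun T ↦ koszulD_eq_zero_of_card_ne hz.1 T.card.succ_ne_zero)
      fun j ↦ (hz.2 ∅ j).coeff_eq_zero (by simpa using hD.symm)
    exact ⟨w, fun T ↦ by rw [hw, sub_self, map_zero]⟩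
  | succ n ih =>
    intro z hz hcycle
    have hrange (T : Finset σ) : koszulD (X (R := K)) z T ∈ LinearMap.range (d (k + 1)) :=
      hd k ▸ LinearMap.mem_ker.2 (hcycle T)
    obtain ⟨w, hw⟩ := (ih (k + 1)).exists_sub_mem_range (e := 0) (hlin k) hz hrange
    exact ⟨w, fun T ↦ LinearMap.mem_ker.1 (hd k ▸ hw T)⟩

theorem mem_ker_iff_apply_default_mem {R ι : Type*} [CommRing R] [Unique ι] {I : Ideal R}
    {ε : (ι →₀ R) →ₗ[R] R ⧸ I} (hε : ε (Finsupp.single default 1) = 1) {f : ι →₀ R} :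
    f ∈ LinearMap.ker ε ↔ f default ∈ I := by
  have hf : f = f default • Finsupp.single default 1 := by
    ext
    simp
  rw [LinearMap.mem_ker, hf, map_smul, hε, ← Ideal.Quotient.eq_zero_iff_mem, ← hf,
    Algebra.smul_def, mul_one, Ideal.Quotient.algebraMap_eq]

end LinearResolution

section HasTwoLinearResolution

variable {σ K : Type*} [Field K] {Δ : Set (Finset σ)}

theorem HasTwoLinearResolution.exists_sub_koszulD_mem [LinearOrder σ] [Fintype σ]
    (h : HasTwoLinearResolution K Δ) {n : ℕ} {p : Finset σ → MvPolynomial σ K}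
    (hcard : ∀ T, T.card ≠ n + 1 → p T = 0) (hdeg : ∀ T, (p T).IsHomogeneous 2)
    (hcycle : ∀ T, koszulD (X (R := K)) p T ∈ srIdeal K Δ) :
    ∃ w, ∀ T, p T - koszulD (X (R := K)) w T ∈ srIdeal K Δ := by
  obtain ⟨ι, _, _, d, ε, hε, -, hker, hd, hquad, hlin⟩ := h
  have hrange {f} : f ∈ LinearMap.range (d 0) ↔ f default ∈ srIdeal K Δ :=
    hker ▸ mem_ker_iff_apply_default_mem hε
  have hD (z : Finset σ → ι 0 →₀ MvPolynomial σ K) (T : Finset σ) :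
      koszulD (X (R := K)) z T default = koszulD (X (R := K)) (z · default) T :=
    (koszulD_comp X (Finsupp.lapply default) z T).symm
  have hz : IsKoszulChain (n + 1) (1 + 1) fun T ↦ Finsupp.single (default : ι 0) (p T) :=
    ⟨fun T hT ↦ by simp only [hcard T hT, Finsupp.single_zero], fun T c ↦ by
      simpa only [Subsingleton.elim c default, Finsupp.single_eq_same] using hdeg T⟩
  obtain ⟨w, hw⟩ := (koszulExactAt_of_linear hd hlin one_ne_zero n 0).exists_sub_mem_range
    hquad hz fun T ↦ hrange.2 (by simpa only [hD, Finsupp.single_eq_same] using hcycle T)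
  refine ⟨(w · default), fun T ↦ ?_⟩
  have := hrange.1 (hw T)
  rwa [Finsupp.sub_apply, hD, Finsupp.single_eq_same] at this

theorem HasTwoLinearResolution.srIdeal_le_span (h : HasTwoLinearResolution K Δ) :
    srIdeal K Δ ≤ Ideal.span {f | f ∈ srIdeal K Δ ∧ f.IsHomogeneous 2} := by
  obtain ⟨ι, _, _, d, ε, hε, -, hker, -, hquad, -⟩ := h
  have hrange {f} : f ∈ LinearMap.range (d 0) ↔ f default ∈ srIdeal K Δ :=
    hker ▸ mem_ker_iff_apply_default_mem hε
  intro f hf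
  obtain ⟨y, hy⟩ : Finsupp.single default f ∈ LinearMap.range (d 0) :=
    hrange.2 (by rwa [Finsupp.single_eq_same])
  rw [← Finsupp.single_eq_same (a := (default : ι 0)) (b := f), ← hy]
  clear hy
  induction y using Finsupp.induction_linear with
  | zero => simp
  | add y y' hy hy' =>
    rw [map_add, Finsupp.add_apply]
    exact Ideal.add_mem _ hy hy'
  | single b p =>
    rw [← mul_one p, ← smul_eq_mul, ← Finsupp.smul_single, map_smul, Finsupp.smul_apply]
    exact Ideal.mul_mem_left _ _ (Ideal.subset_span ⟨hrange.1 ⟨_, rfl⟩, hquad b default⟩)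

end HasTwoLinearResolution

/-! ### Edge ideals -/

section EdgeIdeal

variable {σ : Type*} {K : Type*} [Field K] {H : SimpleGraph σ} {W : Set σ}

/-- The ideal generated by the monomials `X x * X y`, for the edges `xy` of `H` with both ends
in `W`. Its generators are written as monomials with explicit exponents so that membership can be
tested on supports. -/
noncomputable def edgeIdeal (K : Type*) [Field K] (H : SimpleGraph σ) (W : Set σ) :
    Ideal (MvPolynomial σ K) :=
  Ideal.span ((fun s ↦ monomial s (1 : K)) ''
    {s | ∃ x ∈ W, ∃ y ∈ W, H.Adj x y ∧ s = Finsupp.single x 1 + Finsupp.single y 1})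

theorem X_mul_X_mem_edgeIdeal {x y : σ} (hx : x ∈ W) (hy : y ∈ W) (h : H.Adj x y) :
    (X x * X y : MvPolynomial σ K) ∈ edgeIdeal K H W :=
  Ideal.subset_span ⟨_, ⟨x, hx, y, hy, h, rfl⟩, by simp [X, monomial_mul]⟩

theorem edgeIdeal_le {I : Ideal (MvPolynomial σ K)}
    (h : ∀ x ∈ W, ∀ y ∈ W, H.Adj x y → X x * X y ∈ I) : edgeIdeal K H W ≤ I := by
  rw [edgeIdeal, Ideal.span_le]
  rintro _ ⟨_, ⟨x, hx, y, hy, hxy, rfl⟩, rfl⟩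
  simpa [X, monomial_mul] using h x hx y hy hxy

theorem coeff_eq_zero_of_mem_edgeIdeal {f : MvPolynomial σ K} (hf : f ∈ edgeIdeal K H W) {p q : σ}
    (hpq : ¬H.Adj p q) : coeff (Finsupp.single p 1 + Finsupp.single q 1) f = 0 := by
  classical
  by_contra hcoeff
  rw [edgeIdeal, mem_ideal_span_monomial_image] at hf
  obtain ⟨_, ⟨x, -, y, -, hxy, rfl⟩, hle⟩ := hf _ (mem_support_iff.2 hcoeff)
  have mem_pair {z : σ} (hz : (Finsupp.single x 1 + Finsupp.single y 1 : σ →₀ ℕ) z ≠ 0) :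
      z = p ∨ z = q := by
    have := (Nat.pos_of_ne_zero hz).trans_le (hle z)
    simp only [Finsupp.add_apply, Finsupp.single_apply] at this
    grind
  rcases mem_pair (z := x) (by simp) with rfl | rfl <;>
    rcases mem_pair (z := y) (by simp) with rfl | rfl
  exacts [hxy.ne rfl, hpq hxy, hpq hxy.symm, hxy.ne rfl]

variable {Δ : Set (Finset σ)}

/-- The graph whose edges are the one-dimensional faces of `Δ`; when `Δ` is closed under taking
subsets, `uv` is an edge as soon as some face contains both `u` and `v`. -/
def oneSkeleton (Δ : Set (Finset σ)) : SimpleGraph σ where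
  Adj u v := u ≠ v ∧ ∃ S ∈ Δ, u ∈ S ∧ v ∈ S
  symm := ⟨fun _ _ ⟨hne, S, hS, hu, hv⟩ ↦ ⟨hne.symm, S, hS, hv, hu⟩⟩
  loopless := ⟨fun _ h ↦ h.1 rfl⟩

theorem X_mul_X_mem_srIdeal {x y : σ} (h : (oneSkeleton Δ)ᶜ.Adj x y) :
    (X x * X y : MvPolynomial σ K) ∈ srIdeal K Δ := by
  classical
  rw [← Finset.prod_pair h.1]
  exact Ideal.subset_span ⟨_, fun hS ↦ h.2 ⟨h.1, _, hS, by simp, by simp⟩, rfl⟩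

theorem mem_srIdeal_iff {f : MvPolynomial σ K} :
    f ∈ srIdeal K Δ ↔ ∀ m ∈ f.support, ∃ S ∉ Δ, ∑ v ∈ S, Finsupp.single v 1 ≤ m := by
  have : srIdeal K Δ = Ideal.span ((fun s ↦ monomial s (1 : K)) ''
      ((fun S : Finset σ ↦ ∑ v ∈ S, Finsupp.single v 1) '' {S | S ∉ Δ})) := by
    simp only [srIdeal, Set.image_image, monomial_sum_one, X]
  simp [this, mem_ideal_span_monomial_image]

theorem exists_compl_oneSkeleton_adj (hΔ : IsSimplicialComplex Δ) {S : Finset σ} (hS : S ∉ Δ)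
    {m : σ →₀ ℕ} (hm : m.degree = 2) (hle : ∑ v ∈ S, Finsupp.single v 1 ≤ m) :
    ∃ x y, (oneSkeleton Δ)ᶜ.Adj x y ∧ Finsupp.single x 1 + Finsupp.single y 1 ≤ m := by
  classical
  have hcard : S.card ≤ 2 := by
    simpa only [map_sum, Finsupp.degree_single, Finset.sum_const, smul_eq_mul, mul_one, hm]
      using Finsupp.degree_mono hle
  interval_cases h : S.card
  · obtain ⟨v, -⟩ : m.support.Nonempty := by
      rw [Finsupp.support_nonempty_iff]
      rintro rfl
      simp at hm
    exact absurd (hΔ.2 _ (hΔ.1 v) _ (by simp [Finset.card_eq_zero.1 h])) hS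
  · obtain ⟨v, rfl⟩ := Finset.card_eq_one.1 h
    exact absurd (hΔ.1 v) hS
  · obtain ⟨x, y, hxy, rfl⟩ := Finset.card_eq_two.1 h
    rw [Finset.sum_pair hxy] at hle
    refine ⟨x, y, ⟨hxy, fun ⟨_, T, hT, hx, hy⟩ ↦ hS (hΔ.2 T hT _ ?_)⟩, hle⟩
    simp [Finset.insert_subset_iff, hx, hy]

theorem HasTwoLinearResolution.srIdeal_eq_edgeIdeal (hΔ : IsSimplicialComplex Δ)
    (h : HasTwoLinearResolution K Δ) : srIdeal K Δ = edgeIdeal K (oneSkeleton Δ)ᶜ Set.univ := by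
  refine le_antisymm (h.srIdeal_le_span.trans (Ideal.span_le.2 ?_))
    (edgeIdeal_le fun _ _ _ _ hxy ↦ X_mul_X_mem_srIdeal hxy)
  rintro f ⟨hf, hf2⟩
  rw [SetLike.mem_coe, edgeIdeal, mem_ideal_span_monomial_image]
  intro m hm
  obtain ⟨S, hS, hle⟩ := mem_srIdeal_iff.1 hf m hm
  have hdeg : m.degree = 2 := by
    rw [Finsupp.degree_eq_weight_one]
    exact hf2 (mem_support_iff.1 hm)
  obtain ⟨x, y, hxy, hle⟩ := exists_compl_oneSkeleton_adj hΔ hS hdeg hle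
  exact ⟨_, ⟨x, trivial, y, trivial, hxy, rfl⟩, hle⟩

end EdgeIdeal

/-! ### Fröberg's theorem: a 2-linear resolution forces a chordal 1-skeleton -/

section Froberg

variable {σ : Type*} {K : Type*} [Field K] {Δ : Set (Finset σ)}

theorem koszulD_single_mem [LinearOrder σ] [Fintype σ] {I : Ideal (MvPolynomial σ K)}
    {q : MvPolynomial σ K} {T₀ : Finset σ} (hq : ∀ t ∈ T₀, X t * q ∈ I) (T : Finset σ) :
    koszulD (X (R := K)) (Pi.single T₀ q) T ∈ I := by
  rw [koszulD_apply]
  refine Ideal.sum_mem _ fun t _ ↦ ?_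
  rcases eq_or_ne (insert t T) T₀ with h | h
  · rw [h, Pi.single_eq_same, Units.smul_def]
    exact Submodule.smul_of_tower_mem _ _ (hq t (h ▸ Finset.mem_insert_self t T))
  · rw [Pi.single_eq_of_ne h, smul_zero, smul_zero]
    exact I.zero_mem

theorem coeff_koszulD_sdiff_pair [LinearOrder σ] [Fintype σ] (w : Finset σ → MvPolynomial σ K)
    {W : Finset σ} {x y : σ} (hx : x ∈ W) (hy : y ∈ W) (hxy : x ≠ y) :
    coeff (Finsupp.single x 1 + Finsupp.single y 1) (koszulD (X (R := K)) w (W \ {x, y})) =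
      koszulSign (W \ {x, y}) x • coeff (Finsupp.single y 1) (w (W.erase y)) +
        koszulSign (W \ {x, y}) y • coeff (Finsupp.single x 1) (w (W.erase x)) := by
  have hsupp : (Finsupp.single x 1 + Finsupp.single y 1 : σ →₀ ℕ).support \ (W \ {x, y}) =
      {x, y} := by
    ext t
    simp only [Finset.mem_sdiff, Finsupp.mem_support_iff, Finsupp.add_apply, Finsupp.single_apply]
    grind
  have hWy : insert x (W \ {x, y}) = W.erase y := by grind
  have hWx : insert y (W \ {x, y}) = W.erase x := by grind
  rw [coeff_koszulD, hsupp, Finset.sum_pair hxy, hWx, hWy, add_tsub_cancel_left,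
    add_tsub_cancel_right]

theorem koszulSign_erase_smul_sub [LinearOrder σ] {W : Finset σ} {x y : σ} (hx : x ∈ W)
    (hy : y ∈ W) (hxy : x ≠ y) (gx gy : K) :
    koszulSign (W.erase x) x • gx - koszulSign (W.erase y) y • gy =
      (koszulSign (W.erase x) x * koszulSign (W \ {x, y}) y) •
        (koszulSign (W \ {x, y}) x • gy + koszulSign (W \ {x, y}) y • gx) := by
  have hanti := koszulSign_mul_koszulSign_insert (T := W \ {x, y}) (s := x) (t := y)
    (by simp) (by simp) hxy
  have hWy : insert x (W \ {x, y}) = W.erase y := by grind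
  have hWx : insert y (W \ {x, y}) = W.erase x := by grind
  rw [hWx, hWy] at hanti
  have hsign : koszulSign (W.erase x) x * koszulSign (W \ {x, y}) y * koszulSign (W \ {x, y}) x =
      -koszulSign (W.erase y) y := by
    rw [mul_right_comm, mul_comm (koszulSign (W.erase x) x), mul_assoc,
      mul_comm (koszulSign (W.erase x) x), ← neg_eq_iff_eq_neg.2 hanti, mul_neg, ← mul_assoc,
      Int.units_mul_self, one_mul]
  rw [smul_add, smul_smul, smul_smul, hsign, mul_assoc, Int.units_mul_self, mul_one,
    Units.neg_smul, sub_eq_neg_add]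

theorem sym2_eq_of_sdiff_pair_subset [DecidableEq σ] {W : Finset σ} {u a x y : σ} (hx : x ∈ W)
    (hy : y ∈ W) (hxy : x ≠ y) (h : W \ {u, a} ⊆ W \ {x, y}) : s(x, y) = s(u, a) := by
  have hxT := @h x
  have hyT := @h y
  rw [Sym2.eq_iff]
  grind

theorem HasTwoLinearResolution.exists_single_sub_koszulD_mem [LinearOrder σ] [Fintype σ]
    (h : HasTwoLinearResolution K Δ) {W : Finset σ} {u a : σ}
    (hW : ∀ t ∈ W, ¬((oneSkeleton Δ).Adj t u ∧ (oneSkeleton Δ).Adj t a))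
    (hne : (W \ {u, a}).Nonempty) :
    ∃ w, ∀ T, (Pi.single (W \ {u, a}) (X u * X a) : Finset σ → MvPolynomial σ K) T -
      koszulD (X (R := K)) w T ∈ srIdeal K Δ := by
  have hcycle (t : σ) (ht : t ∈ W \ {u, a}) : X t * (X u * X a) ∈ srIdeal K Δ := by
    simp only [Finset.mem_sdiff, Finset.mem_insert, Finset.mem_singleton, not_or] at ht
    by_cases htu : (oneSkeleton Δ).Adj t u
    · rw [mul_left_comm]
      exact Ideal.mul_mem_left _ _ (X_mul_X_mem_srIdeal ⟨ht.2.2, fun hta ↦ hW t ht.1 ⟨htu, hta⟩⟩)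
    · rw [← mul_assoc]
      exact Ideal.mul_mem_right _ _ (X_mul_X_mem_srIdeal ⟨ht.2.1, htu⟩)
  refine h.exists_sub_koszulD_mem (n := (W \ {u, a}).card - 1) (fun T hT ↦ ?_) (fun T ↦ ?_)
    (koszulD_single_mem hcycle)
  · refine Pi.single_eq_of_ne (fun hT' ↦ hT ?_) _
    rw [hT', Nat.sub_add_cancel hne.card_pos]
  · rw [Pi.single_apply]
    split_ifs
    exacts [(isHomogeneous_X K u).mul (isHomogeneous_X K a), isHomogeneous_zero _ _ _]

/- The coefficients of a Koszul chain bounding the cycle `X u * X a` on `W \ {u, a}` form, up to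
sign, a function on `W` whose coboundary is supported on the single edge `ua`. -/
theorem HasTwoLinearResolution.exists_potential [Finite σ] (hΔ : IsSimplicialComplex Δ)
    (h : HasTwoLinearResolution K Δ) {W : Finset σ} {u a : σ} (hu : u ∈ W) (ha : a ∈ W)
    (hua : (oneSkeleton Δ).Adj u a)
    (hW : ∀ t ∈ W, ¬((oneSkeleton Δ).Adj t u ∧ (oneSkeleton Δ).Adj t a)) :
    ∃ F : σ → K, F u ≠ F a ∧ ∀ x ∈ W, ∀ y ∈ W, (oneSkeleton Δ).Adj x y → s(x, y) ≠ s(u, a) →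
      F x = F y := by
  classical
  cases nonempty_fintype σ
  let : LinearOrder σ := linearOrderOfSTO WellOrderingRel
  rcases (W \ {u, a}).eq_empty_or_nonempty with hT₀ | hT₀
  · refine ⟨Pi.single u 1, by simp [hua.ne'], fun x hx y hy hxy hne ↦ ?_⟩
    exact absurd (sym2_eq_of_sdiff_pair_subset hx hy hxy.ne (by simp [hT₀])) hne
  obtain ⟨w, hw⟩ := h.exists_single_sub_koszulD_mem hW hT₀
  let F (x : σ) : K := koszulSign (W.erase x) x • coeff (Finsupp.single x 1) (w (W.erase x))
  have hF {x y : σ} (hx : x ∈ W) (hy : y ∈ W) (hxy : (oneSkeleton Δ).Adj x y) : F x - F y =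
      (koszulSign (W.erase x) x * koszulSign (W \ {x, y}) y) •
        coeff (Finsupp.single x 1 + Finsupp.single y 1)
          ((Pi.single (W \ {u, a}) (X u * X a) : Finset σ → MvPolynomial σ K) (W \ {x, y})) := by
    have hcoeff := hw (W \ {x, y})
    rw [h.srIdeal_eq_edgeIdeal hΔ] at hcoeff
    rw [koszulSign_erase_smul_sub hx hy hxy.ne, ← coeff_koszulD_sdiff_pair w hx hy hxy.ne,
      ← sub_eq_zero.1 ((coeff_sub ..).symm.trans
        (coeff_eq_zero_of_mem_edgeIdeal hcoeff fun hc ↦ hc.2 hxy))]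
  refine ⟨F, fun hFua ↦ ?_, fun x hx y hy hxy hne ↦ ?_⟩
  · have := hF hu ha hua
    rw [hFua, sub_self, Pi.single_eq_same, eq_comm, smul_eq_zero_iff_eq, coeff_mul_X] at this
    simp at this
  · rw [← sub_eq_zero, hF hx hy hxy, Pi.single_eq_of_ne, coeff_zero, smul_zero]
    exact fun hT ↦ hne (sym2_eq_of_sdiff_pair_subset hx hy hxy.ne hT.ge)

theorem apply_eq_of_reachable {α β : Type*} {G : SimpleGraph α} {f : α → β}
    (hf : ∀ x y, G.Adj x y → f x = f y) {x y : α} (h : G.Reachable x y) : f x = f y := by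
  obtain ⟨p⟩ := h
  induction p with
  | nil => rfl
  | cons hadj _ ih => exact (hf _ _ hadj).trans ih

/-- Chordal graphs, described without cycles: the common boundary of a vertex `a` and a connected
set `B` away from `a` is a clique. Two nonadjacent vertices of that boundary lie on an induced cycle
of length at least 4, made of `a` and a shortest path through `B`; conversely such a cycle is of
this form. -/
def IsChordal (G : SimpleGraph σ) : Prop :=
  ∀ ⦃a : σ⦄ ⦃B : Set σ⦄, (G.induce B).Preconnected → (∀ b ∈ B, Gᶜ.Adj a b) →
    G.IsClique {x | G.Adj x a ∧ ∃ b ∈ B, G.Adj b x}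

theorem HasTwoLinearResolution.isChordal_oneSkeleton [Finite σ] (hΔ : IsSimplicialComplex Δ)
    (h : HasTwoLinearResolution K Δ) : IsChordal (oneSkeleton Δ) := by
  classical
  cases nonempty_fintype σ
  rintro a B hB haB x ⟨hxa, b, hb, hbx⟩ y ⟨hya, c, hc, hcy⟩ hxy
  by_contra hadj
  have hW (t : σ) (ht : t ∈ ({a, x, y} ∪ B : Set σ).toFinset) :
      ¬((oneSkeleton Δ).Adj t x ∧ (oneSkeleton Δ).Adj t a) := by
    rintro ⟨htx, hta⟩
    rw [Set.mem_toFinset] at ht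
    rcases ht with (rfl | rfl | rfl) | ht
    exacts [hta.ne rfl, htx.ne rfl, hadj htx.symm, (haB t ht).2 hta.symm]
  obtain ⟨F, hne, hF⟩ := h.exists_potential hΔ (by simp) (by simp) hxa hW
  simp only [Set.mem_toFinset] at hF
  have ne_of_mem {s : σ} (hs : s ∈ B) : s ≠ x ∧ s ≠ a :=
    ⟨fun hsx ↦ (haB s hs).2 (hsx ▸ hxa.symm), (haB s hs).ne'⟩
  have hF_of_mem {s t : σ} (hs : s ∈ B) (ht : t ∈ ({a, x, y} ∪ B : Set σ))
      (hst : (oneSkeleton Δ).Adj s t) : F s = F t := by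
    refine hF s (Or.inr hs) t ht hst fun heq ↦ ?_
    rcases Sym2.eq_iff.1 heq with ⟨hsx, -⟩ | ⟨hsa, -⟩
    exacts [(ne_of_mem hs).1 hsx, (ne_of_mem hs).2 hsa]
  have hFbc : F b = F c := apply_eq_of_reachable (f := fun s : B ↦ F s)
    (fun s t hst ↦ hF_of_mem s.2 (Or.inr t.2) hst) (hB ⟨b, hb⟩ ⟨c, hc⟩)
  have hFya : F y = F a := by
    refine hF y (by simp) a (by simp) hya fun heq ↦ ?_
    rcases Sym2.eq_iff.1 heq with ⟨hyx, -⟩ | ⟨hya', -⟩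
    exacts [hxy hyx.symm, hya.ne hya']
  exact hne <| calc
    F x = F b := (hF_of_mem hb (by simp) hbx).symm
    _ = F c := hFbc
    _ = F y := hF_of_mem hc (by simp) hcy
    _ = F a := hFya

end Froberg

/-! ### Dirac's theorem: chordal graphs have simplicial vertices -/

section Dirac

variable {σ : Type*} [Finite σ] {G : SimpleGraph σ} {W : Set σ}

theorem exists_connected_subset (G : SimpleGraph σ) {U : Set σ} {b : σ} (hb : b ∈ U) :
    ∃ B ⊆ U, b ∈ B ∧ (G.induce B).Connected ∧ ∀ x ∈ B, ∀ c ∈ U, G.Adj x c → c ∈ B := by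
  obtain ⟨B, hbB, ⟨hBU, hB⟩, hmax⟩ := Set.Finite.exists_le_maximal
    (s := {B : Set σ | B ⊆ U ∧ (G.induce B).Connected}) (Set.toFinite _) (a := {b})
    ⟨Set.singleton_subset_iff.2 hb, by simp [SimpleGraph.connected_top]⟩
  refine ⟨B, hBU, by simpa using hbB, hB, fun x hx c hc hxc ↦ ?_⟩
  have hBc : (G.induce (B ∪ {x, c})).Connected := SimpleGraph.induce_union_connected
    hB.preconnected (SimpleGraph.induce_pair_connected_of_adj hxc).preconnected ⟨x, hx, by simp⟩
  have hBcU : B ∪ {x, c} ⊆ U := Set.union_subset hBU (Set.pair_subset (hBU hx) hc)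
  exact hmax ⟨hBcU, hBc⟩ Set.subset_union_left (by simp)

/- `B` is the component of `b` in `W` minus the closed neighbourhood of `a`, and `C` its boundary.
By chordality `C` is a clique, so one of two nonadjacent simplicial vertices of `B ∪ C` is in `B`,
where all of its neighbours in `W` are visible. -/
theorem IsChordal.exists_simplicial_not_adj (hG : IsChordal G)
    (ih : ∀ D ⊂ W, ¬G.IsClique D → ∃ s ∈ D, ∃ t ∈ D, Gᶜ.Adj s t ∧
      G.IsClique (D ∩ G.neighborSet s) ∧ G.IsClique (D ∩ G.neighborSet t))
    {a b : σ} (ha : a ∈ W) (hb : b ∈ W) (hab : Gᶜ.Adj a b) :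
    ∃ s ∈ W, Gᶜ.Adj a s ∧ G.IsClique (W ∩ G.neighborSet s) := by
  obtain ⟨B, hBU, hbB, hBconn, hBext⟩ :=
    exists_connected_subset G (U := {x ∈ W | Gᶜ.Adj a x}) ⟨hb, hab⟩
  let C : Set σ := {x ∈ W | G.Adj x a ∧ ∃ b ∈ B, G.Adj b x}
  have hC : G.IsClique C :=
    (hG hBconn.preconnected fun b hb ↦ (hBU hb).2).subset fun x hx ↦ hx.2
  have hnbr {s : σ} (hs : s ∈ B) : W ∩ G.neighborSet s ⊆ (B ∪ C) ∩ G.neighborSet s := by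
    rintro x ⟨hxW, hsx⟩
    refine ⟨?_, hsx⟩
    by_cases hxa : G.Adj x a
    · exact Or.inr ⟨hxW, hxa, s, hs, hsx⟩
    · refine Or.inl (hBext s hs x ⟨hxW, fun hax ↦ ?_, fun hax ↦ hxa hax.symm⟩ hsx)
      subst hax
      exact (hBU hs).2.2 hsx.symm
  suffices ∃ s ∈ B, G.IsClique ((B ∪ C) ∩ G.neighborSet s) by
    obtain ⟨s, hs, hclique⟩ := this
    exact ⟨s, (hBU hs).1, (hBU hs).2, hclique.subset (hnbr hs)⟩
  by_cases hD : G.IsClique (B ∪ C)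
  · exact ⟨b, hbB, hD.subset Set.inter_subset_left⟩
  have haD : a ∉ B ∪ C := fun h ↦ h.elim (fun h ↦ (hBU h).2.ne rfl) fun h ↦ h.2.1.ne rfl
  have hDW : B ∪ C ⊂ W :=
    ⟨Set.union_subset (fun x hx ↦ (hBU hx).1) fun x hx ↦ hx.1, fun h ↦ haD (h ha)⟩
  obtain ⟨s, hs, t, ht, hst, hscl, htcl⟩ := ih _ hDW hD
  rcases hs with hs | hs
  · exact ⟨s, hs, hscl⟩
  rcases ht with ht | ht
  · exact ⟨t, ht, htcl⟩
  exact absurd (hC hs ht hst.ne) hst.2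

theorem IsChordal.exists_two_simplicial (hG : IsChordal G) (hW : ¬G.IsClique W) :
    ∃ s ∈ W, ∃ t ∈ W, Gᶜ.Adj s t ∧
      G.IsClique (W ∩ G.neighborSet s) ∧ G.IsClique (W ∩ G.neighborSet t) := by
  induction W using WellFoundedLT.induction with
  | ind W ih =>
  obtain ⟨a, ha, b, hb, hne, hadj⟩ : ∃ a ∈ W, ∃ b ∈ W, a ≠ b ∧ ¬G.Adj a b := by
    simpa [SimpleGraph.IsClique, Set.Pairwise] using hW
  obtain ⟨s, hs, has, hscl⟩ := hG.exists_simplicial_not_adj ih ha hb ⟨hne, hadj⟩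
  obtain ⟨t, ht, hst, htcl⟩ := hG.exists_simplicial_not_adj ih hs ha has.symm
  exact ⟨s, hs, t, ht, hst, hscl, htcl⟩

theorem IsChordal.exists_simplicial (hG : IsChordal G) (hW : W.Nonempty) :
    ∃ s ∈ W, G.IsClique (W ∩ G.neighborSet s) := by
  by_cases hcl : G.IsClique W
  · exact ⟨hW.some, hW.some_mem, hcl.subset Set.inter_subset_left⟩
  · obtain ⟨s, hs, -, -, -, hscl, -⟩ := hG.exists_two_simplicial hcl
    exact ⟨s, hs, hscl⟩

end Dirac

/-! ### Generators up to radical -/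

section ConeSeq

variable {R : Type*} [CommRing R] {g : ℕ → R} {l : List R} {v : R}

/-- The sequence `g` is triangular with respect to the list `l`: its `i`-th term lies in the ideal
generated by the first `i + 1` entries of `l`. -/
def IsTriangular (g : ℕ → R) (l : List R) : Prop :=
  ∀ i, g i ∈ Ideal.span {x | x ∈ l.take (i + 1)}

/-- The sequence `v * l₀, g₀ + v * l₁, g₁ + v * l₂, …`, where `l` is continued by zeros. When `g` is
triangular with respect to `l`, it generates `(g) + v * (l)` up to radical. -/
def coneSeq (v : R) (l : List R) (g : ℕ → R) : ℕ → R
  | 0 => v * l.getD 0 0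
  | i + 1 => g i + v * l.getD (i + 1) 0

theorem getD_mem_span_take (l : List R) (i : ℕ) :
    l.getD i 0 ∈ Ideal.span {x | x ∈ l.take (i + 1)} := by
  rcases lt_or_ge i l.length with hi | hi
  · rw [List.getD_eq_getElem _ _ hi]
    exact Ideal.subset_span (List.mem_take_iff_getElem.2 ⟨i, by omega, rfl⟩)
  · rw [List.getD_eq_default _ _ hi]
    exact zero_mem _

theorem coneSeq_eq_zero {p i : ℕ} (hg : ∀ i, p ≤ i → g i = 0) (hp : p + 1 ≤ i)
    (hl : l.length ≤ i) : coneSeq v l g i = 0 := by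
  obtain ⟨i, rfl⟩ : ∃ j, i = j + 1 := ⟨i - 1, by omega⟩
  rw [coneSeq, hg i (by omega), List.getD_eq_default _ _ hl, mul_zero, add_zero]

theorem IsTriangular.mono {l' : List R} (h : IsTriangular g l)
    (hl : ∀ i, l.take i ⊆ l'.take i) : IsTriangular g l' :=
  fun i ↦ Ideal.span_mono (fun _ hx ↦ hl _ hx) (h i)

theorem IsTriangular.coneSeq_self (h : IsTriangular g l) (v : R) :
    IsTriangular (coneSeq v l g) l := by
  rintro (_ | i)
  · exact Ideal.mul_mem_left _ _ (getD_mem_span_take l 0)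
  · have hsub : {x | x ∈ l.take (i + 1)} ⊆ {x | x ∈ l.take (i + 1 + 1)} :=
      fun x hx ↦ List.take_subset_take_left l (Nat.le_succ _) hx
    exact add_mem (Ideal.span_mono hsub (h i)) (Ideal.mul_mem_left _ _ (getD_mem_span_take l _))

theorem IsTriangular.coneSeq_cons (h : IsTriangular g l) (v : R) (l' : List R) :
    IsTriangular (coneSeq v l' g) (v :: l) := by
  have hv (i : ℕ) (r : R) : v * r ∈ Ideal.span {x | x ∈ (v :: l).take (i + 1)} :=
    Ideal.mul_mem_right _ _ (Ideal.subset_span (by simp))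
  rintro (_ | i)
  · exact hv 0 _
  · have hsub : {x | x ∈ l.take (i + 1)} ⊆ {x | x ∈ (v :: l).take (i + 1 + 1)} :=
      fun x hx ↦ List.mem_cons_of_mem v hx
    exact add_mem (Ideal.span_mono hsub (h i)) (hv _ _)

theorem IsTriangular.subset_of_coneSeq_mem (h : IsTriangular g l) {P : Ideal R} (hP : P.IsPrime)
    (hmem : ∀ i, coneSeq v l g i ∈ P) (hv : v ∉ P) : {x | x ∈ l} ⊆ (P : Set R) := by
  suffices ∀ i, {x | x ∈ l.take i} ⊆ (P : Set R) by simpa using this l.length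
  intro i
  induction i with
  | zero => simp
  | succ i ih =>
    have hvl : v * l.getD i 0 ∈ P := by
      cases i with
      | zero => exact hmem 0
      | succ i => exact (P.add_mem_iff_right (Ideal.span_le.2 ih (h i))).1 (hmem (i + 1))
    intro x hx
    rw [Set.mem_ofPred_eq, List.take_add_one, List.mem_append] at hx
    rcases hx with hx | hx
    · exact ih hx
    · have hxi : l[i]? = some x := by simpa using hx
      rw [← show l.getD i 0 = x by simp [List.getD, hxi]]
      exact (hP.mem_or_mem hvl).resolve_left hv

theorem IsTriangular.radical_span_range_coneSeq (h : IsTriangular g l) (v : R) :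
    (Ideal.span (Set.range (coneSeq v l g))).radical =
      (Ideal.span (Set.range g) ⊔ Ideal.span {v} * Ideal.span {x | x ∈ l}).radical := by
  have hvl (i : ℕ) : v * l.getD i 0 ∈ Ideal.span {v} * Ideal.span {x | x ∈ l} :=
    Ideal.mul_mem_mul (Ideal.mem_span_singleton_self v)
      (Ideal.span_mono (fun _ hx ↦ List.mem_of_mem_take hx) (getD_mem_span_take l i))
  apply le_antisymm
  · refine Ideal.radical_mono (Ideal.span_le.2 (Set.range_subset_iff.2 ?_))
    rintro (_ | i)
    · exact Ideal.mem_sup_right (hvl 0)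
    · exact add_mem (Ideal.mem_sup_left (Ideal.subset_span ⟨i, rfl⟩)) (Ideal.mem_sup_right (hvl _))
  · rw [Ideal.radical_le_radical_iff, Ideal.radical_eq_sInf]
    refine le_sInf fun P ⟨hPle, hP⟩ ↦ ?_
    have hmem (i : ℕ) : coneSeq v l g i ∈ P := hPle (Ideal.subset_span ⟨i, rfl⟩)
    have hspan : Ideal.span (Set.range g) ≤ P ↔ ∀ i, g i ∈ P := by
      simp [Ideal.span_le, Set.range_subset_iff]
    by_cases hv : v ∈ P
    · refine sup_le (hspan.2 fun i ↦ ?_) (Ideal.mul_le_left.trans (by simpa))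
      exact (P.add_mem_iff_left (P.mul_mem_right _ hv)).1 (hmem (i + 1))
    · have hl := h.subset_of_coneSeq_mem hP hmem hv
      refine sup_le (hspan.2 fun i ↦ ?_) (Ideal.mul_le_right.trans (Ideal.span_le.2 hl))
      exact Ideal.span_le.2 (fun x hx ↦ hl (List.mem_of_mem_take hx)) (h i)

end ConeSeq

/-! ### Graphs built by coning over cliques -/

section EdgeIdeal

variable {σ : Type*} {G : SimpleGraph σ} {W Y : Set σ} {v : σ} {K : Type*} [Field K]

theorem edgeIdeal_compl_eq_bot_of_isClique (hW : G.IsClique W) :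
    edgeIdeal K Gᶜ W = ⊥ :=
  eq_bot_iff.2 (edgeIdeal_le fun _ hx _ hy hxy ↦ absurd (hW hx hy hxy.ne) hxy.2)

theorem edgeIdeal_compl_le_varIdeal (h : G.IsClique (W \ Y)) :
    edgeIdeal K Gᶜ W ≤ varIdeal K Y := by
  refine edgeIdeal_le fun x hx y hy hxy ↦ ?_
  by_cases hxY : x ∈ Y
  · exact Ideal.mul_mem_right _ _ (X_mem_varIdeal hxY)
  by_cases hyY : y ∈ Y
  · exact Ideal.mul_mem_left _ _ (X_mem_varIdeal hyY)
  exact absurd (h ⟨hx, hxY⟩ ⟨hy, hyY⟩ hxy.ne) hxy.2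

theorem mem_edgeIdeal_of_X_mul_mem {H : SimpleGraph σ} (hv : v ∉ W) (r : MvPolynomial σ K)
    (h : X v * r ∈ edgeIdeal K H W) : r ∈ edgeIdeal K H W := by
  refine mem_of_X_mul_mem_span_monomial ?_ r h
  rintro _ ⟨x, hx, y, hy, -, rfl⟩
  rw [Finsupp.add_apply, Finsupp.single_eq_of_ne (ne_of_mem_of_not_mem hx hv).symm,
    Finsupp.single_eq_of_ne (ne_of_mem_of_not_mem hy hv).symm, add_zero]

theorem edgeIdeal_insert {H : SimpleGraph σ}
    (hY : ∀ x, x ∈ Y ↔ x ∈ W ∧ H.Adj v x) :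
    edgeIdeal K H (insert v W) = edgeIdeal K H W ⊔ Ideal.span {X v} * varIdeal K Y := by
  have hvY {x : σ} (hx : x ∈ W) (hvx : H.Adj v x) :
      X v * X x ∈ edgeIdeal K H W ⊔ Ideal.span {X v} * varIdeal K Y :=
    Ideal.mem_sup_right (Ideal.mul_mem_mul (Ideal.mem_span_singleton_self _)
      (X_mem_varIdeal ((hY x).2 ⟨hx, hvx⟩)))
  apply le_antisymm
  · refine edgeIdeal_le ?_
    rintro x (rfl | hx) y (rfl | hy) hxy
    · exact absurd rfl hxy.ne
    · exact hvY hy hxy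
    · rw [mul_comm (X x)]
      exact hvY hx hxy.symm
    · exact Ideal.mem_sup_left (X_mul_X_mem_edgeIdeal hx hy hxy)
  · refine sup_le (edgeIdeal_le fun x hx y hy ↦ X_mul_X_mem_edgeIdeal (Or.inr hx) (Or.inr hy)) ?_
    rw [Ideal.span_singleton_mul_le_iff]
    intro f hf
    have : varIdeal K Y ≤ (edgeIdeal K H (insert v W)).colon {X v} := by
      rw [varIdeal, Ideal.span_le]
      rintro _ ⟨x, hx, rfl⟩
      rw [SetLike.mem_coe, Submodule.mem_colon_singleton, smul_eq_mul, mul_comm]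
      exact X_mul_X_mem_edgeIdeal (Or.inl rfl) (Or.inr ((hY x).1 hx).1) ((hY x).1 hx).2
    rw [mul_comm]
    exact Submodule.mem_colon_singleton.1 (this hf)

end EdgeIdeal

section IsConeBuilt

variable {σ : Type*} [DecidableEq σ] {G : SimpleGraph σ} {W : Finset σ} {p : ℕ} {v : σ}
  {K : Type*} [Field K]

/-- `IsConeBuilt G W p` says that `W` is built from a clique of `G` by successively adding vertices
`v` whose neighbours among the vertices already present form a clique, but which have a nonempty
set `Y` of non-neighbours there. The number `p`, which is both the projective dimension and the
arithmetical rank of the ideal of non-edges on `W`, is the maximum over all steps of the size of `Y`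
plus the number of later steps. -/
inductive IsConeBuilt (G : SimpleGraph σ) : Finset σ → ℕ → Prop
  | clique {W : Finset σ} (hW : G.IsClique W) : IsConeBuilt G W 0
  | cone {W Y : Finset σ} {p : ℕ} {v : σ} (hW : IsConeBuilt G W p) (hv : v ∉ W)
      (hclique : G.IsClique {x | x ∈ W ∧ G.Adj v x}) (hY : ∀ x, x ∈ Y ↔ x ∈ W ∧ Gᶜ.Adj v x)
      (hne : Y.Nonempty) : IsConeBuilt G (insert v W) (max (p + 1) Y.card)

theorem IsChordal.exists_isConeBuilt [Finite σ] (hG : IsChordal G) (W : Finset σ) :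
    ∃ p, IsConeBuilt G W p := by
  classical
  induction W using Finset.strongInduction with
  | H W ih =>
  rcases W.eq_empty_or_nonempty with rfl | hW
  · exact ⟨0, .clique (by simp)⟩
  obtain ⟨v, hv, hclique⟩ := hG.exists_simplicial (W := (W : Set σ)) hW
  have hclique' : G.IsClique {x | x ∈ W.erase v ∧ G.Adj v x} := by
    refine hclique.subset fun x hx ↦ ?_
    exact ⟨Finset.mem_of_mem_erase hx.1, hx.2⟩
  rcases ((W.erase v).filter (Gᶜ.Adj v ·)).eq_empty_or_nonempty with hY | hY
  · have hadj (x : σ) (hx : x ∈ W.erase v) : G.Adj v x := by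
      simpa [(Finset.ne_of_mem_erase hx).symm] using Finset.filter_eq_empty_iff.1 hY hx
    have hsub : (W.erase v : Set σ) ⊆ {x | x ∈ W.erase v ∧ G.Adj v x} :=
      fun x hx ↦ And.intro hx (hadj x hx)
    refine ⟨0, .clique ?_⟩
    rw [← Finset.insert_erase hv, Finset.coe_insert]
    exact (hclique'.subset hsub).insert fun x hx _ ↦ hadj x hx
  · obtain ⟨p, hp⟩ := ih (W.erase v) (Finset.erase_ssubset hv)
    rw [← Finset.insert_erase hv]
    exact ⟨_, hp.cone (Finset.notMem_erase v W) hclique' (fun x ↦ Finset.mem_filter) hY⟩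

/-- There are two nonempty disjoint subsets of `W` with no edges of `G` between them and `n`
elements altogether. -/
def HasSeparatedPair (G : SimpleGraph σ) (W : Finset σ) (n : ℕ) : Prop :=
  ∃ A ⊆ W, ∃ B ⊆ W, A.Nonempty ∧ B.Nonempty ∧ (∀ x ∈ A, ∀ y ∈ B, Gᶜ.Adj x y) ∧
    A.card + B.card = n

theorem HasSeparatedPair.insert {n : ℕ} (h : HasSeparatedPair G W n) (hv : v ∉ W)
    (hclique : G.IsClique {x | x ∈ W ∧ G.Adj v x}) :
    HasSeparatedPair G (insert v W) (n + 1) := by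
  obtain ⟨A, hAW, B, hBW, hA, hB, hAB, hcard⟩ := h
  have hne {x : σ} (hx : x ∈ W) : v ≠ x := fun hvx ↦ hv (hvx ▸ hx)
  have hsub {S : Finset σ} (hS : S ⊆ W) : S ⊆ Insert.insert v W :=
    hS.trans (Finset.subset_insert v W)
  by_cases hadj : ∃ x ∈ A, G.Adj v x
  · obtain ⟨x, hx, hvx⟩ := hadj
    have hvB (y : σ) (hy : y ∈ B) : Gᶜ.Adj v y := ⟨hne (hBW hy), fun hvy ↦
      (hAB x hx y hy).2 (hclique ⟨hAW hx, hvx⟩ ⟨hBW hy, hvy⟩ (hAB x hx y hy).ne)⟩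
    refine ⟨Insert.insert v A, Finset.insert_subset_insert v hAW, B, hsub hBW, by simp, hB,
      (Finset.forall_mem_insert ..).2 ⟨hvB, hAB⟩, ?_⟩
    rw [Finset.card_insert_of_notMem fun h ↦ hv (hAW h), ← hcard, add_right_comm]
  · push Not at hadj
    refine ⟨A, hsub hAW, Insert.insert v B, Finset.insert_subset_insert v hBW, hA, by simp,
      fun x hx ↦ (Finset.forall_mem_insert ..).2 ⟨?_, hAB x hx⟩, ?_⟩
    · exact ⟨(hne (hAW hx)).symm, fun hxv ↦ hadj x hx hxv.symm⟩
    · rw [Finset.card_insert_of_notMem fun h ↦ hv (hBW h), ← hcard, add_assoc]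

theorem IsConeBuilt.hasSeparatedPair (h : IsConeBuilt G W p) (hp : p ≠ 0) :
    HasSeparatedPair G W (p + 1) := by
  induction h with
  | clique => exact absurd rfl hp
  | @cone W Y p v _ hv hclique hY hne ih =>
  rcases le_or_gt (p + 1) Y.card with hle | hlt
  · rw [max_eq_right hle]
    refine ⟨{v}, by simp, Y, fun x hx ↦ Finset.mem_insert_of_mem ((hY x).1 hx).1, by simp, hne,
      fun x hx y hy ↦ ?_, by rw [Finset.card_singleton, add_comm]⟩
    rw [Finset.mem_singleton.1 hx]
    exact ((hY y).1 hy).2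
  · rw [max_eq_left hlt.le]
    have := hne.card_pos
    exact (ih (by omega)).insert hv hclique

theorem isClique_sdiff {Y : Finset σ} (hv : v ∉ W)
    (hclique : G.IsClique {x | x ∈ W ∧ G.Adj v x}) (hY : ∀ x, x ∈ Y ↔ x ∈ W ∧ Gᶜ.Adj v x) :
    G.IsClique (W \ Y : Finset σ) := by
  refine hclique.subset fun x hx ↦ ?_
  obtain ⟨hxW, hxY⟩ := Finset.mem_sdiff.1 hx
  refine And.intro hxW (by_contra fun h ↦ hxY ((hY x).2 ⟨hxW, ?_, h⟩))
  rintro rfl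
  exact hv hxW

theorem IsConeBuilt.hasProjectiveDimensionLT (h : IsConeBuilt G W p) :
    HasProjectiveDimensionLT (ModuleCat.of (MvPolynomial σ K)
      (MvPolynomial σ K ⧸ edgeIdeal K Gᶜ (W : Set σ))) (p + 1) := by
  induction h with
  | clique hW =>
    rw [edgeIdeal_compl_eq_bot_of_isClique hW]
    exact hasProjectiveDimensionLT_quotient_bot
  | @cone W Y p v _ hv hclique hY _ ih =>
    rw [Finset.coe_insert, edgeIdeal_insert (Y := (Y : Set σ)) hY]
    have hvar := hasProjectiveDimensionLT_quotient_varIdeal (K := K) Y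
    have hle : edgeIdeal K Gᶜ (W : Set σ) ≤ varIdeal K Y :=
      edgeIdeal_compl_le_varIdeal (by simpa using isClique_sdiff hv hclique hY)
    refine hasProjectiveDimensionLT_quotient_sup_span_singleton_mul hle
      (mem_edgeIdeal_of_X_mul_mem hv) (hasProjectiveDimensionLT_of_ge _ (p + 1) _ (le_max_left _ _))
      (hasProjectiveDimensionLT_of_ge _ (Y.card + 1) _ (by omega))

variable (K) in
/-- For every clique `C` contained in `W`, the sequence `g` is triangular with respect to the
variables indexed by `W \ C`, listed in a suitable order. -/
def IsTriangularOffCliques (G : SimpleGraph σ) (W : Finset σ) (g : ℕ → MvPolynomial σ K) : Prop :=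
  ∀ C ⊆ W, G.IsClique (C : Set σ) →
    ∃ l : List σ, l.Perm (W \ C).toList ∧ IsTriangular g (l.map X)

theorem IsTriangularOffCliques.coneSeq {g : ℕ → MvPolynomial σ K} {Y : Finset σ} {l : List σ}
    (h : IsTriangularOffCliques K G W g) (hv : v ∉ W) (hY : ∀ x, x ∈ Y ↔ x ∈ W ∧ Gᶜ.Adj v x)
    (hlY : l.Perm Y.toList) (hl : IsTriangular g (l.map X)) :
    IsTriangularOffCliques K G (insert v W) (coneSeq (X v) (l.map X) g) := by
  intro C hCW hC
  by_cases hvC : v ∈ C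
  · have hYC : ∀ x ∈ Y, x ∉ C := fun x hx hxC ↦
      ((hY x).1 hx).2.2 (hC hvC hxC ((hY x).1 hx).2.ne)
    have hmem (x : σ) : x ∈ l ↔ x ∈ Y := by rw [hlY.mem_iff, Finset.mem_toList]
    refine ⟨l ++ ((W \ Y) \ C).toList, ?_, (hl.coneSeq_self (X v)).mono fun i ↦ ?_⟩
    · refine (List.perm_ext_iff_of_nodup ?_ (Finset.nodup_toList _)).2 fun x ↦ ?_
      · refine (hlY.nodup_iff.2 Y.nodup_toList).append (Finset.nodup_toList _) ?_
        intro x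
        simp +contextual [hmem]
      · simp only [List.mem_append, hmem, Finset.mem_toList, Finset.mem_sdiff, Finset.mem_insert]
        grind
    · rw [List.map_append, List.take_append]
      exact List.subset_append_left _ _
  · obtain ⟨l', hl'C, hl'⟩ := h C ((Finset.subset_insert_iff_of_notMem hvC).1 hCW) hC
    refine ⟨v :: l', ?_, hl'.coneSeq_cons (X v) _⟩
    rw [Finset.insert_sdiff_of_notMem _ hvC]
    exact (hl'C.cons v).trans (Finset.toList_insert (by simp [hv])).symm

theorem IsConeBuilt.exists_isTriangularOffCliques (h : IsConeBuilt G W p) :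
    ∃ g : ℕ → MvPolynomial σ K, (∀ i, p ≤ i → g i = 0) ∧
      (Ideal.span (Set.range g)).radical = (edgeIdeal K Gᶜ (W : Set σ)).radical ∧
      IsTriangularOffCliques K G W g := by
  induction h with
  | @clique W hW =>
    refine ⟨0, fun _ _ ↦ rfl, ?_, fun C _ _ ↦ ⟨(W \ C).toList, .refl _, fun i ↦ zero_mem _⟩⟩
    rw [edgeIdeal_compl_eq_bot_of_isClique hW, Ideal.span_eq_bot.2 (by simp)]
  | @cone W Y p v _ hv hclique hY _ ih =>
    obtain ⟨g, hg, hrad, htri⟩ := ih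
    have hYW : Y ⊆ W := fun x hx ↦ ((hY x).1 hx).1
    obtain ⟨l, hlY, hl⟩ := htri (W \ Y) Finset.sdiff_subset (isClique_sdiff hv hclique hY)
    rw [Finset.sdiff_sdiff_eq_self hYW] at hlY
    have hspan : Ideal.span {x | x ∈ l.map X} = varIdeal K (Y : Set σ) :=
      congrArg Ideal.span (Set.ext fun x ↦ by simp [hlY.mem_iff])
    refine ⟨_, fun i hi ↦ coneSeq_eq_zero hg (le_of_max_le_left hi) ?_, ?_,
      htri.coneSeq hv hY hlY hl⟩
    · rw [List.length_map, hlY.length_eq, Finset.length_toList]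
      exact le_of_max_le_right hi
    · rw [hl.radical_span_range_coneSeq, hspan, Finset.coe_insert,
        edgeIdeal_insert (Y := (Y : Set σ)) hY, Ideal.radical_sup, hrad, ← Ideal.radical_sup]

end IsConeBuilt

/-! ### Projective dimension through resolutions -/

section Resolution

open Limits

variable {C : Type*} [Category C] [Abelian C]

theorem hasProjectiveDimensionLT_of_projectiveResolution {Z : C} {m : ℕ}
    (P : ProjectiveResolution Z) (h : ∀ i, m < i → IsZero (P.complex.X i)) :
    HasProjectiveDimensionLT Z (m + 1) := by
  let := HasExt.standard C
  rw [hasProjectiveDimensionLT_iff]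
  intro i hi Y e
  obtain ⟨f, hf, rfl⟩ := P.extMk_surjective e (i + 1) rfl
  obtain rfl : f = 0 := (h i (by omega)).eq_of_src _ _
  exact P.extMk_zero _ _

theorem exact_comp_mono {X Y Z W : C} {f : X ⟶ Y} {g : Y ⟶ Z} {w : f ≫ g = 0}
    (h : (ShortComplex.mk f g w).Exact) (ι : Z ⟶ W) [Mono ι] :
    (ShortComplex.mk f (g ≫ ι) (by rw [reassoc_of% w, zero_comp])).Exact := by
  let α : ShortComplex.mk f g w ⟶
      ShortComplex.mk f (g ≫ ι) (by rw [reassoc_of% w, zero_comp]) :=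
    { τ₁ := 𝟙 _, τ₂ := 𝟙 _, τ₃ := ι }
  have : Epi α.τ₁ := inferInstanceAs (Epi (𝟙 _))
  have : IsIso α.τ₂ := inferInstanceAs (IsIso (𝟙 _))
  have : Mono α.τ₃ := inferInstanceAs (Mono ι)
  exact (ShortComplex.exact_iff_of_epi_of_isIso_of_mono α).1 h

theorem exact_epi_comp {X Y Z W : C} {f : Y ⟶ Z} {g : Z ⟶ W} {w : f ≫ g = 0}
    (h : (ShortComplex.mk f g w).Exact) (q : X ⟶ Y) [Epi q] :
    (ShortComplex.mk (q ≫ f) g (by rw [Category.assoc, w, comp_zero])).Exact := by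
  let α : ShortComplex.mk (q ≫ f) g (by rw [Category.assoc, w, comp_zero]) ⟶
      ShortComplex.mk f g w :=
    { τ₁ := q, τ₂ := 𝟙 _, τ₃ := 𝟙 _ }
  have : Epi α.τ₁ := inferInstanceAs (Epi q)
  have : IsIso α.τ₂ := inferInstanceAs (IsIso (𝟙 _))
  have : Mono α.τ₃ := inferInstanceAs (Mono (𝟙 _))
  exact (ShortComplex.exact_iff_of_epi_of_isIso_of_mono α).2 h

theorem quasiIso_toSingle₀Equiv_symm {D : ChainComplex C ℕ} {Z : C} {π : D.X 0 ⟶ Z}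
    (w : D.d 1 0 ≫ π = 0) [Epi π] (h₀ : (ShortComplex.mk (D.d 1 0) π w).Exact)
    (h : ∀ n, (D.sc' (n + 2) (n + 1) n).Exact) :
    QuasiIso ((ChainComplex.toSingle₀Equiv D Z).symm ⟨π, w⟩) := by
  refine ⟨fun n ↦ ?_⟩
  rcases n with _ | n
  · rw [ChainComplex.quasiIsoAt₀_iff,
      ShortComplex.quasiIso_iff_of_zeros' _ (D.shape _ _ (by simp)) rfl rfl]
    refine (ShortComplex.exact_and_epi_g_iff_of_iso ?_).2 ⟨h₀, ‹_›⟩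
    exact ShortComplex.isoMk (Iso.refl _) (Iso.refl _) (Iso.refl _)
      ((Category.id_comp _).trans (Category.comp_id _).symm)
      ((Category.id_comp π).trans ((ChainComplex.toSingle₀Equiv_symm_apply_f_zero π w).symm.trans
        (Category.comp_id _).symm))
  · rw [quasiIsoAt_iff_exactAt' _ _ (ChainComplex.exactAt_succ_single_obj _ _),
      HomologicalComplex.exactAt_iff' _ (n + 1 + 1) (n + 1) n (by simp) (by simp)]
    exact h n

theorem exists_projectiveResolution_of_shortExact {S : ShortComplex C} (hS : S.ShortExact)
    [Projective S.X₂] (Q : ProjectiveResolution S.X₁) :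
    ∃ P : ProjectiveResolution S.X₃, ∀ i, P.complex.X (i + 1) = Q.complex.X i := by
  have := hS.mono_f
  have := hS.epi_g
  let q : Q.complex.X 0 ⟶ S.X₁ := Q.π.f 0
  have : Epi q := inferInstanceAs (Epi (Q.π.f 0))
  have hdq : Q.complex.d 1 0 ≫ q = 0 := Q.complex_d_comp_π_f_zero
  have hd : (ShortComplex.mk (Q.complex.d 1 0) q hdq).Exact :=
    ShortComplex.exact_of_g_is_cokernel _ Q.isColimitCokernelCofork
  let D := Q.complex.augment (q ≫ S.f) (by rw [reassoc_of% hdq, zero_comp])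
  have hDπ : D.d 1 0 ≫ S.g = 0 :=
    (Category.assoc q S.f S.g).trans (by rw [S.zero, comp_zero]; rfl)
  have : Epi (Y := S.X₃) (X := D.X 0) S.g := ‹Epi S.g›
  refine ⟨{ complex := D
            projective := ?_
            π := (ChainComplex.toSingle₀Equiv D S.X₃).symm ⟨S.g, hDπ⟩
            quasiIso := quasiIso_toSingle₀Equiv_symm hDπ (exact_epi_comp hS.exact q) ?_ },
    fun _ ↦ rfl⟩
  · rintro (_ | n)
    exacts [‹Projective S.X₂›, Q.projective n]
  · rintro (_ | n)
    exacts [exact_comp_mono hd S.f, Q.exact_succ n]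

theorem exists_projectiveResolution_of_hasProjectiveDimensionLT [EnoughProjectives C] {m : ℕ}
    {Z : C} (h : HasProjectiveDimensionLT Z (m + 1)) :
    ∃ P : ProjectiveResolution Z, ∀ i, m < i → IsZero (P.complex.X i) := by
  induction m generalizing Z with
  | zero =>
    have : Projective Z := projective_iff_hasProjectiveDimensionLT_one.2 h
    exact ⟨ProjectiveResolution.self Z,
      fun i hi ↦ HomologicalComplex.isZero_single_obj_X _ _ _ _ (by omega)⟩
  | succ m ih =>
    have hS : (ShortComplex.mk (kernel.ι (Projective.π Z)) (Projective.π Z)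
        (by simp)).ShortExact :=
      { exact := ShortComplex.exact_of_f_is_kernel _ (kernelIsKernel _) }
    have hproj : Projective (Projective.over Z) := inferInstance
    obtain ⟨Q, hQ⟩ := ih ((hS.hasProjectiveDimensionLT_X₃_iff m hproj).1 h)
    obtain ⟨P, hP⟩ := exists_projectiveResolution_of_shortExact hS Q
    refine ⟨P, fun i hi ↦ ?_⟩
    obtain ⟨i, rfl⟩ : ∃ j, i = j + 1 := ⟨i - 1, by omega⟩
    rw [hP]
    exact hQ i (by omega)

end Resolution

/-! ### Arithmetical rank and projective dimension of edge ideals -/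

section ConeBuiltInvariants

variable {σ : Type*} {G : SimpleGraph σ} {W : Finset σ} {p s : ℕ} {K : Type*} [Field K]

theorem edgeIdeal_le_varIdeal_compl_singleton (H : SimpleGraph σ) (W : Set σ) (v : σ) :
    edgeIdeal K H W ≤ varIdeal K {v}ᶜ := by
  refine edgeIdeal_le fun x _ y _ hxy ↦ ?_
  by_cases hxv : x = v
  · exact Ideal.mul_mem_left _ _ (X_mem_varIdeal fun hyv ↦ hxy.ne (hxv.trans hyv.symm))
  · exact Ideal.mul_mem_right _ _ (X_mem_varIdeal hxv)

variable [Finite σ]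

theorem HasSeparatedPair.le_of_cohomDimLE {n : ℕ} (h : HasSeparatedPair G W n)
    (hcd : CohomDimLE (ModuleCat.of (MvPolynomial σ K) (MvPolynomial σ K ⧸ varIdeal K (∅ : Set σ)))
      (edgeIdeal K Gᶜ (W : Set σ)) s) : n ≤ s + 1 := by
  obtain ⟨A, hAW, B, hBW, hA, hB, hAB, rfl⟩ := h
  have hdisj : Disjoint A B := Finset.disjoint_left.2 fun x hx hx' ↦ (hAB x hx x hx').ne rfl
  exact hcd.card_add_card_le hdisj hA hB (edgeIdeal_le_varIdeal_compl_singleton _ _)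
    fun x hx y hy ↦ X_mul_X_mem_edgeIdeal (hAW hx) (hBW hy) (hAB x hx y hy)

variable [DecidableEq σ]

theorem IsConeBuilt.le_of_cohomDimLE (h : IsConeBuilt G W p)
    (hcd : CohomDimLE (ModuleCat.of (MvPolynomial σ K) (MvPolynomial σ K ⧸ varIdeal K (∅ : Set σ)))
      (edgeIdeal K Gᶜ (W : Set σ)) s) : p ≤ s := by
  rcases eq_or_ne p 0 with rfl | hp
  · exact s.zero_le
  · exact Nat.le_of_succ_le_succ ((h.hasSeparatedPair hp).le_of_cohomDimLE hcd)

theorem IsConeBuilt.ara_edgeIdeal (h : IsConeBuilt G W p) :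
    ara (edgeIdeal K Gᶜ (W : Set σ)) = p := by
  have hp : ∃ a : Fin p → MvPolynomial σ K,
      (Ideal.span (Set.range a)).radical = (edgeIdeal K Gᶜ (W : Set σ)).radical := by
    obtain ⟨g, hg, hrad, -⟩ := h.exists_isTriangularOffCliques (K := K)
    refine ⟨fun i ↦ g i, (congrArg Ideal.radical (le_antisymm ?_ ?_)).trans hrad⟩
    · exact Ideal.span_mono (Set.range_subset_iff.2 fun i ↦ ⟨i, rfl⟩)
    · refine Ideal.span_le.2 (Set.range_subset_iff.2 fun i ↦ ?_)
      rcases lt_or_ge i p with hi | hi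
      · exact Ideal.subset_span ⟨⟨i, hi⟩, rfl⟩
      · rw [hg i hi]
        exact zero_mem _
  refine le_antisymm (Nat.sInf_le hp) (le_csInf ⟨p, hp⟩ ?_)
  rintro s ⟨a, ha⟩
  exact h.le_of_cohomDimLE ((cohomDimLE_span_range _ a).congr ha)

theorem IsConeBuilt.projDim_quotient_edgeIdeal (h : IsConeBuilt G W p) :
    projDim (ModuleCat.of (MvPolynomial σ K)
      (MvPolynomial σ K ⧸ edgeIdeal K Gᶜ (W : Set σ))) = p := by
  have hp := exists_projectiveResolution_of_hasProjectiveDimensionLT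
    (h.hasProjectiveDimensionLT (K := K))
  refine le_antisymm (Nat.sInf_le hp) (le_csInf ⟨p, hp⟩ ?_)
  rintro s ⟨P, hP⟩
  exact h.le_of_cohomDimLE
    (cohomDimLE_span_monomial _ (hasProjectiveDimensionLT_of_projectiveResolution P hP))

end ConeBuiltInvariants

theorem ara_eq_projDim_of_twoLinear_general {σ : Type*} [Finite σ] (K : Type*) [Field K]
    (Δ : Set (Finset σ)) (hΔ : IsSimplicialComplex Δ) (hlin : HasTwoLinearResolution K Δ) :
    ara (srIdeal K Δ) =
      projDim (ModuleCat.of (MvPolynomial σ K) (MvPolynomial σ K ⧸ srIdeal K Δ)) := by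
  classical
  have := Fintype.ofFinite σ
  obtain ⟨p, hp⟩ := (hlin.isChordal_oneSkeleton hΔ).exists_isConeBuilt Finset.univ
  rw [hlin.srIdeal_eq_edgeIdeal hΔ, ← Finset.coe_univ, hp.ara_edgeIdeal,
    hp.projDim_quotient_edgeIdeal]

/-- STATEMENT 14 (Corollary 3, Morales): for `K` algebraically closed, if `K[Δ]` has a
2-linear resolution then `ara I_Δ = pd K[Δ]`. -/
theorem ara_eq_projDim_of_twoLinear {V : Type*} [Fintype V] [DecidableEq V]
    (K : Type*) [Field K] [IsAlgClosed K]
    (Δ : Set (Finset V)) (hΔ : IsSimplicialComplex Δ)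
    (hlin : HasTwoLinearResolution K Δ) :
    ara (srIdeal K Δ) =
      projDim (ModuleCat.of (MvPolynomial V K) (MvPolynomial V K ⧸ srIdeal K Δ)) :=
  ara_eq_projDim_of_twoLinear_general K Δ hΔ hlin
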